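/- Let (λ_N)_{N≥1} be any sequence of positive reals with N·λ_N → 1 as N → ∞. Then E(λ_N, N) − (λ_N/2) N (N−1) ŵ(0) converges to e_B as N → ∞. -/

import Mathlib

open MeasureTheory Real

noncomputable section

/-- The unit cube `[0,1]^{dN}` in the configuration space of `N` particles in `ℝ^d`. -/
def cube (d N : ℕ) : Set (Fin N → Fin d → ℝ) :=
  Set.univ.pi fun _ => Set.univ.pi fun _ => Set.Icc (0 : ℝ) 1

/-- The unit cube `[0,1]^d` in `ℝ^d`. -/
def cube1 (d : ℕ) : Set (Fin d → ℝ) :=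
  Set.univ.pi fun _ => Set.Icc (0 : ℝ) 1

/-- `Ψ` is admissible: smooth, `ℤ^d`-periodic in each particle variable, symmetric under
permutations of the particles, and `L²`-normalized on the unit cube. -/
def IsAdmissible (d N : ℕ) (Ψ : (Fin N → Fin d → ℝ) → ℂ) : Prop :=
  ContDiff ℝ (⊤ : ℕ∞) Ψ ∧
  (∀ (x : Fin N → Fin d → ℝ) (j : Fin N) (v : Fin d → ℤ),
      Ψ (Function.update x j (x j + fun i => (v i : ℝ))) = Ψ x) ∧
  (∀ (σ : Equiv.Perm (Fin N)) (x : Fin N → Fin d → ℝ), Ψ (x ∘ σ) = Ψ x) ∧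
  (∫ x in cube d N, ‖Ψ x‖ ^ 2) = 1

/-- The energy `ℰ_{λ,N}(Ψ)` of a wave function `Ψ`. -/
def energy (d N : ℕ) (lam : ℝ) (w : (Fin d → ℝ) → ℝ)
    (Ψ : (Fin N → Fin d → ℝ) → ℂ) : ℝ :=
  ∫ x in cube d N,
    ((∑ j : Fin N, ∑ i : Fin d, ‖fderiv ℝ Ψ x (Pi.single j (Pi.single i 1))‖ ^ 2) +
      lam * (∑ j : Fin N, ∑ k : Fin N, if j < k then w (x j - x k) else 0) * ‖Ψ x‖ ^ 2)

/-- The ground state energy `E(λ,N)`. -/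
def GSE (d N : ℕ) (lam : ℝ) (w : (Fin d → ℝ) → ℝ) : ℝ :=
  sInf {e | ∃ Ψ, IsAdmissible d N Ψ ∧ energy d N lam w Ψ = e}

/-- The interaction potential defined by the absolutely convergent Fourier series
`w(x) = ∑_{p ∈ (2πℤ)^d} ŵ(p) e^{ip·x}`, with the lattice point `p = 2πk` indexed by
`k ∈ ℤ^d`. -/
def wOf (d : ℕ) (hw : (Fin d → ℤ) → ℝ) (x : Fin d → ℝ) : ℝ :=
  (∑' k : Fin d → ℤ,
    (hw k : ℂ) * Complex.exp (Complex.I * ((∑ i, (2 * π * (k i : ℝ)) * x i : ℝ) : ℂ))).re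

/-- `|p|²` for the lattice point `p = 2πk`. -/
def pSq (d : ℕ) (k : Fin d → ℤ) : ℝ := ∑ i, (2 * π * (k i : ℝ)) ^ 2

/-- The elementary excitation energy `e_p = √(|p|⁴ + 2|p|²ŵ(p))`. -/
def ePk (d : ℕ) (hw : (Fin d → ℤ) → ℝ) (k : Fin d → ℤ) : ℝ :=
  Real.sqrt (pSq d k ^ 2 + 2 * pSq d k * hw k)

/-- The Bogoliubov coefficient `α_p = ŵ(p)/(|p|² + ŵ(p) + e_p)`. -/
def alphaP (d : ℕ) (hw : (Fin d → ℤ) → ℝ) (k : Fin d → ℤ) : ℝ :=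
  hw k / (pSq d k + hw k + ePk d hw k)

/-- The Bogoliubov ground state energy
`e_B = -(1/2) ∑_{p ≠ 0} (|p|² + ŵ(p) - e_p)`. -/
def eB (d : ℕ) (hw : (Fin d → ℤ) → ℝ) : ℝ :=
  -(1 / 2) * ∑' k : {k : Fin d → ℤ // k ≠ 0}, (pSq d k.1 + hw k.1 - ePk d hw k.1)

/-- The projection `Q_j` removing the condensate in the `j`-th variable. -/
def Qop (d N : ℕ) (j : Fin N) (Ψ : (Fin N → Fin d → ℝ) → ℂ) :
    (Fin N → Fin d → ℝ) → ℂ :=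
  fun x => Ψ x - ∫ y in cube1 d, Ψ (Function.update x j y)

/-- The expected number of excited particles `⟨𝒩₊⟩_Ψ`. -/
def NplusExp (d N : ℕ) (Ψ : (Fin N → Fin d → ℝ) → ℂ) : ℝ :=
  ∑ j : Fin N, ∫ x in cube d N, ‖Qop d N j Ψ x‖ ^ 2

/-- The second moment `⟨𝒩₊²⟩_Ψ` of the number of excited particles. -/
def NplusSqExp (d N : ℕ) (Ψ : (Fin N → Fin d → ℝ) → ℂ) : ℝ :=
  ∑ j : Fin N, ∑ k : Fin N, ∫ x in cube d N, ‖Qop d N j (Qop d N k Ψ) x‖ ^ 2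

/-!
In terms of the density modes `ρ_p = ∑_j e^{ip·x_j}` the interaction is, up to the constant
`(λ/2) N (N - 1) ŵ(0)`, the quadratic expression `(λ/2) ∑_{p ≠ 0} ŵ(p) (|ρ_p|² - N)`. With
`F = ∑_p c_p |ρ_p|² / (2N)`, completing the square in the kinetic energy gives
`-Δ ≥ ΔF - |∇F|²`, with equality on the Jastrow state `e^{-F}`. Up to terms cubic in `ρ`, the right
hand side is `∑_p c_p |p|² - ∑_p (c_p + c_p²) |p|² |ρ_p|² / N`. The choice
`(c_p + c_p²) |p|² = ŵ(p) / 2`, that is `c_p = (e_p - |p|²) / (2|p|²)`, cancels the interaction when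
`N λ = 1` and leaves the constant `∑_p c_p |p|² - ∑_{p ≠ 0} ŵ(p) / 2 = e_B`.

For the upper bound, `c` is cut off to a finite set of modes, and the cubic terms are `O(N^{-1/2})`
in the Jastrow state because Jensen's inequality keeps its normalization bounded below. For the
lower bound, `∇F` is replaced by `χ∇F` with `χ = 1 / (1 + κF)` and `κ` of order `1 / N`, which
bounds the cubic terms by a small multiple of the kinetic energy; the latter is recovered by
spending a small fraction of the Hamiltonian.
-/

open Filter Topology Finset
open scoped ComplexConjugate Matrix Pointwise RealInnerProductSpace

/-! ### Integration over the unit cube -/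

section Pi

variable {ι : Type*} [Fintype ι] [DecidableEq ι] {α : ι → Type*} [∀ i, MeasurableSpace (α i)]
  (μ : ∀ i, Measure (α i)) [∀ i, IsProbabilityMeasure (μ i)]

theorem measurePreserving_update (j : ι) :
    MeasurePreserving (fun z : (∀ i, α i) × α j ↦ Function.update z.1 j z.2)
      ((Measure.pi μ).prod (μ j)) (Measure.pi μ) := by
  have hmeas : Measurable (fun z : (∀ i, α i) × α j ↦ Function.update z.1 j z.2) :=
    measurable_pi_iff.2 fun i ↦ by
      by_cases h : i = j
      · subst h; simpa using measurable_snd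
      · simpa [Function.update_of_ne h] using measurable_fst.eval
  refine ⟨hmeas, (Measure.pi_eq fun s hs ↦ ?_).symm⟩
  have hpre : (fun z : (∀ i, α i) × α j ↦ Function.update z.1 j z.2) ⁻¹' (Set.univ.pi s)
      = (Set.univ.pi (Function.update s j Set.univ)) ×ˢ s j := by
    ext z
    simp only [Set.mem_preimage, Set.mem_prod, Set.mem_univ_pi]
    rw [Function.forall_update_iff z.1 fun i y ↦ y ∈ s i,
      Function.forall_update_iff s fun i t ↦ z.1 i ∈ t, and_comm]
    simp
  rw [Measure.map_apply hmeas (.univ_pi hs), hpre, Measure.prod_prod, Measure.pi_pi,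
    ← mul_prod_erase univ _ (mem_univ j), ← mul_prod_erase univ _ (mem_univ j),
    prod_congr rfl fun i hi ↦ by rw [Function.update_of_ne (ne_of_mem_erase hi)]]
  simp [mul_comm]

theorem integral_pi_eq_integral_integral_update {E : Type*} [NormedAddCommGroup E]
    [NormedSpace ℝ E] {f : (∀ i, α i) → E} (hf : Integrable f (Measure.pi μ)) (j : ι) :
    ∫ x, f x ∂Measure.pi μ = ∫ x, ∫ y, f (Function.update x j y) ∂μ j ∂Measure.pi μ := by
  have hmp := measurePreserving_update μ j
  conv_lhs => rw [← hmp.map_eq]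
  rw [integral_map hmp.measurable.aemeasurable (by rw [hmp.map_eq]; exact hf.1), integral_prod]
  exact (hmp.integrable_comp hf.1).2 hf

end Pi

instance isProbabilityMeasure_restrict_Icc_zero_one :
    IsProbabilityMeasure ((volume : Measure ℝ).restrict (Set.Icc 0 1)) :=
  ⟨by simp⟩

theorem volume_restrict_cube1 (d : ℕ) :
    (volume : Measure (Fin d → ℝ)).restrict (cube1 d)
      = Measure.pi fun _ ↦ (volume : Measure ℝ).restrict (Set.Icc 0 1) := by
  rw [cube1, volume_pi, Measure.restrict_pi_pi]

instance isProbabilityMeasure_restrict_cube1 (d : ℕ) :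
    IsProbabilityMeasure ((volume : Measure (Fin d → ℝ)).restrict (cube1 d)) := by
  rw [volume_restrict_cube1]; infer_instance

theorem volume_restrict_cube (d N : ℕ) :
    (volume : Measure (Fin N → Fin d → ℝ)).restrict (cube d N)
      = Measure.pi fun _ ↦ (volume : Measure (Fin d → ℝ)).restrict (cube1 d) := by
  rw [show cube d N = Set.univ.pi fun _ ↦ cube1 d from rfl, volume_pi, Measure.restrict_pi_pi]

instance isProbabilityMeasure_restrict_cube (d N : ℕ) :
    IsProbabilityMeasure ((volume : Measure (Fin N → Fin d → ℝ)).restrict (cube d N)) := by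
  rw [volume_restrict_cube]; infer_instance

section Cube

variable {d N : ℕ} {E : Type*} [NormedAddCommGroup E]

theorem integrableOn_cube1 {f : (Fin d → ℝ) → E} (hf : Continuous f) :
    IntegrableOn f (cube1 d) :=
  hf.continuousOn.integrableOn_compact (isCompact_univ_pi fun _ ↦ isCompact_Icc)

theorem integrableOn_cube {f : (Fin N → Fin d → ℝ) → E} (hf : Continuous f) :
    IntegrableOn f (cube d N) :=
  hf.continuousOn.integrableOn_compact
    (isCompact_univ_pi fun _ ↦ isCompact_univ_pi fun _ ↦ isCompact_Icc)

variable [NormedSpace ℝ E]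

theorem integral_cube_eq_integral_update {f : (Fin N → Fin d → ℝ) → E} (hf : Continuous f)
    (j : Fin N) (i : Fin d) :
    ∫ x in cube d N, f x = ∫ x in cube d N, ∫ y in cube1 d, ∫ t in (0 : ℝ)..1,
      f (Function.update x j (Function.update y i t)) := by
  have hcube : Integrable f
      (Measure.pi fun _ : Fin N ↦ (volume : Measure (Fin d → ℝ)).restrict (cube1 d)) := by
    rw [← volume_restrict_cube]; exact integrableOn_cube hf
  rw [volume_restrict_cube, integral_pi_eq_integral_integral_update _ hcube j]
  refine integral_congr_ae (.of_forall fun x ↦ ?_)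
  have hcube1 : Integrable (fun y ↦ f (Function.update x j y))
      (Measure.pi fun _ : Fin d ↦ (volume : Measure ℝ).restrict (Set.Icc 0 1)) := by
    rw [← volume_restrict_cube1]
    exact integrableOn_cube1 (hf.comp (continuous_const.update j continuous_id))
  simp only [volume_restrict_cube1, integral_pi_eq_integral_integral_update _ hcube1 i,
    integral_Icc_eq_integral_Ioc, intervalIntegral.integral_of_le zero_le_one]

end Cube

/-! ### Periodic functions with a continuous partial derivative -/

/-- The configuration space of `N` particles in `ℝ^d`. -/
abbrev Config (d N : ℕ) := Fin N → Fin d → ℝ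

/-- The unit vector along the `i`-th coordinate of the `j`-th particle. -/
def coordVec {d N : ℕ} (j : Fin N) (i : Fin d) : Config d N := Pi.single j (Pi.single i 1)

/-- `f` is continuous, has period one in the `i`-th coordinate of the `j`-th particle, and has the
continuous function `f'` as its partial derivative there: the functions of one coordinate to which
integration by parts over the unit cube applies without boundary terms. -/
structure HasPeriodicDeriv {d N : ℕ} {E : Type*} [NormedAddCommGroup E] [NormedSpace ℝ E]
    (j : Fin N) (i : Fin d) (f f' : Config d N → E) : Prop where
  continuous : Continuous f
  continuous_deriv : Continuous f'
  periodic : Function.Periodic f (coordVec j i)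
  hasLineDerivAt : ∀ x, HasLineDerivAt ℝ f (f' x) x (coordVec j i)

section PeriodicDeriv

variable {d N : ℕ} {j : Fin N} {i : Fin d}

theorem update_update_add_smul_coordVec (x : Config d N) (y : Fin d → ℝ) (t s : ℝ) :
    Function.update x j (Function.update y i t) + s • coordVec j i
      = Function.update x j (Function.update y i (t + s)) := by
  ext a b
  by_cases ha : a = j
  · subst ha
    by_cases hb : b = i
    · subst hb; simp [coordVec]
    · simp [coordVec, hb]
  · simp [coordVec, ha]

theorem add_coordVec_eq_update (x : Config d N) :
    x + coordVec j i = Function.update x j (x j + Pi.single i 1) := by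
  ext a b
  by_cases ha : a = j
  · subst ha; simp [coordVec]
  · simp [coordVec, ha]

namespace HasPeriodicDeriv

variable {E G : Type*} [NormedAddCommGroup E] [NormedSpace ℝ E]
  [NormedAddCommGroup G] [NormedSpace ℝ G] {f f' : Config d N → E}

theorem integral_eq_zero [CompleteSpace E] (hf : HasPeriodicDeriv j i f f') :
    ∫ x in cube d N, f' x = 0 := by
  rw [integral_cube_eq_integral_update hf.continuous_deriv j i]
  suffices ∀ x y, ∫ t in (0 : ℝ)..1, f' (Function.update x j (Function.update y i t)) = 0 by
    simp [this]
  intro x y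
  let g : ℝ → Config d N := fun t ↦ Function.update x j (Function.update y i t)
  have hg : Continuous g := continuous_const.update j (continuous_const.update i continuous_id)
  have hg_add (t s : ℝ) : g t + s • coordVec j i = g (t + s) :=
    update_update_add_smul_coordVec x y t s
  have hderiv (t : ℝ) : HasDerivAt (f ∘ g) (f' (g t)) t := by
    have h := hf.hasLineDerivAt (g t)
    simp only [HasLineDerivAt, hg_add, ← sub_self t] at h
    simpa [Function.comp_def] using h.comp_sub_const t t
  rw [intervalIntegral.integral_eq_sub_of_hasDerivAt (fun t _ ↦ hderiv t)
    ((hf.continuous_deriv.comp hg).intervalIntegrable _ _), sub_eq_zero]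
  have hg_one : g 1 = g 0 + coordVec j i := by simpa using (hg_add 0 1).symm
  simpa [hg_one] using hf.periodic (g 0)

theorem congr_deriv {g' : Config d N → E} (hf : HasPeriodicDeriv j i f f')
    (h : ∀ x, f' x = g' x) : HasPeriodicDeriv j i f g' :=
  funext h ▸ hf

theorem clm_comp (L : E →L[ℝ] G) (hf : HasPeriodicDeriv j i f f') :
    HasPeriodicDeriv j i (fun x ↦ L (f x)) fun x ↦ L (f' x) where
  continuous := L.continuous.comp hf.continuous
  continuous_deriv := L.continuous.comp hf.continuous_deriv
  periodic := hf.periodic.comp L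
  hasLineDerivAt x := L.hasFDerivAt.comp_hasDerivAt (0 : ℝ) (hf.hasLineDerivAt x)

theorem const_smul (c : ℝ) (hf : HasPeriodicDeriv j i f f') :
    HasPeriodicDeriv j i (fun x ↦ c • f x) fun x ↦ c • f' x :=
  hf.clm_comp (c • ContinuousLinearMap.id ℝ E)

theorem sum {κ : Type*} {s : Finset κ} {f f' : κ → Config d N → E}
    (hf : ∀ k ∈ s, HasPeriodicDeriv j i (f k) (f' k)) :
    HasPeriodicDeriv j i (fun x ↦ ∑ k ∈ s, f k x) fun x ↦ ∑ k ∈ s, f' k x where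
  continuous := continuous_finsetSum _ fun k hk ↦ (hf k hk).continuous
  continuous_deriv := continuous_finsetSum _ fun k hk ↦ (hf k hk).continuous_deriv
  periodic x := sum_congr rfl fun k hk ↦ (hf k hk).periodic x
  hasLineDerivAt x := HasDerivAt.fun_sum fun k hk ↦ (hf k hk).hasLineDerivAt x

theorem mul {𝔸 : Type*} [NormedRing 𝔸] [NormedAlgebra ℝ 𝔸] {f f' g g' : Config d N → 𝔸}
    (hf : HasPeriodicDeriv j i f f') (hg : HasPeriodicDeriv j i g g') :
    HasPeriodicDeriv j i (fun x ↦ f x * g x) fun x ↦ f' x * g x + f x * g' x where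
  continuous := hf.continuous.mul hg.continuous
  continuous_deriv := (hf.continuous_deriv.mul hg.continuous).add
    (hf.continuous.mul hg.continuous_deriv)
  periodic := hf.periodic.mul hg.periodic
  hasLineDerivAt x := by
    simpa [HasLineDerivAt] using (hf.hasLineDerivAt x).fun_mul (hg.hasLineDerivAt x)

theorem comp {f f' : Config d N → ℝ} (hf : HasPeriodicDeriv j i f f') {φ : ℝ → ℝ}
    {φ' : Config d N → ℝ} (hφ : ∀ x, HasDerivAt φ (φ' x) (f x)) (hφ' : Continuous φ') :
    HasPeriodicDeriv j i (fun x ↦ φ (f x)) fun x ↦ φ' x * f' x where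
  continuous := continuous_iff_continuousAt.2 fun x ↦
    (hφ x).continuousAt.comp hf.continuous.continuousAt
  continuous_deriv := hφ'.mul hf.continuous_deriv
  periodic := hf.periodic.comp φ
  hasLineDerivAt x := (hφ x).comp_of_eq 0 (hf.hasLineDerivAt x) (by simp)

theorem norm_sq {E : Type*} [NormedAddCommGroup E] [InnerProductSpace ℝ E]
    {f f' : Config d N → E} (hf : HasPeriodicDeriv j i f f') :
    HasPeriodicDeriv j i (fun x ↦ ‖f x‖ ^ 2) fun x ↦ 2 * ⟪f x, f' x⟫ where
  continuous := hf.continuous.norm.pow 2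
  continuous_deriv := continuous_const.mul (hf.continuous.inner hf.continuous_deriv)
  periodic := hf.periodic.comp (‖·‖ ^ 2)
  hasLineDerivAt x := by simpa [HasLineDerivAt] using (hf.hasLineDerivAt x).norm_sq

end HasPeriodicDeriv

section Kinetic

variable {E : Type*} [NormedAddCommGroup E] [InnerProductSpace ℝ E]

theorem HasPeriodicDeriv.integral_norm_sq_eq {Ψ Ψ' : Config d N → E}
    (hΨ : HasPeriodicDeriv j i Ψ Ψ') {A A' : Config d N → ℝ} (hA : HasPeriodicDeriv j i A A') :
    ∫ x in cube d N, ‖Ψ' x‖ ^ 2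
      = ∫ x in cube d N, ((A' x - A x ^ 2) * ‖Ψ x‖ ^ 2 + ‖Ψ' x + A x • Ψ x‖ ^ 2) := by
  have hdiv := hA.mul hΨ.norm_sq
  have hpoint (x : Config d N) : (A' x - A x ^ 2) * ‖Ψ x‖ ^ 2 + ‖Ψ' x + A x • Ψ x‖ ^ 2
      = ‖Ψ' x‖ ^ 2 + (A' x * ‖Ψ x‖ ^ 2 + A x * (2 * ⟪Ψ x, Ψ' x⟫)) := by
    rw [norm_add_sq_real, real_inner_smul_right, real_inner_comm, norm_smul, mul_pow,
      norm_eq_abs, sq_abs]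
    ring
  simp only [hpoint]
  have hΨ' : Continuous fun x ↦ ‖Ψ' x‖ ^ 2 := hΨ.continuous_deriv.norm.pow 2
  rw [integral_add (integrableOn_cube hΨ') (integrableOn_cube hdiv.continuous_deriv),
    hdiv.integral_eq_zero, add_zero]

variable {Ψ : Config d N → E} {Ψ' : Fin N → Fin d → Config d N → E}
  {A A' : Fin N → Fin d → Config d N → ℝ}

theorem integral_sum_norm_sq_eq (hΨ : ∀ j i, HasPeriodicDeriv j i Ψ (Ψ' j i))
    (hA : ∀ j i, HasPeriodicDeriv j i (A j i) (A' j i)) :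
    ∫ x in cube d N, ∑ j, ∑ i, ‖Ψ' j i x‖ ^ 2
      = ∫ x in cube d N, ∑ j, ∑ i, ((A' j i x - A j i x ^ 2) * ‖Ψ x‖ ^ 2
          + ‖Ψ' j i x + A j i x • Ψ x‖ ^ 2) := by
  have hleft (j i) : Continuous fun x ↦ ‖Ψ' j i x‖ ^ 2 := (hΨ j i).continuous_deriv.norm.pow 2
  have hright (j i) : Continuous fun x ↦
      (A' j i x - A j i x ^ 2) * ‖Ψ x‖ ^ 2 + ‖Ψ' j i x + A j i x • Ψ x‖ ^ 2 :=
    (((hA j i).continuous_deriv.sub ((hA j i).continuous.pow 2)).mul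
      ((hΨ j i).continuous.norm.pow 2)).add
      (((hΨ j i).continuous_deriv.add ((hA j i).continuous.smul (hΨ j i).continuous)).norm.pow 2)
  rw [integral_finsetSum _ fun j _ ↦ integrableOn_cube (continuous_finsetSum _ fun i _ ↦ hleft j i),
    integral_finsetSum _ fun j _ ↦ integrableOn_cube (continuous_finsetSum _ fun i _ ↦ hright j i)]
  refine sum_congr rfl fun j _ ↦ ?_
  rw [integral_finsetSum _ fun i _ ↦ integrableOn_cube (hleft j i),
    integral_finsetSum _ fun i _ ↦ integrableOn_cube (hright j i)]
  exact sum_congr rfl fun i _ ↦ (hΨ j i).integral_norm_sq_eq (hA j i)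

theorem integral_divergence_sub_sq_mul_norm_sq_le (hΨ : ∀ j i, HasPeriodicDeriv j i Ψ (Ψ' j i))
    (hA : ∀ j i, HasPeriodicDeriv j i (A j i) (A' j i)) :
    ∫ x in cube d N, (∑ j, ∑ i, (A' j i x - A j i x ^ 2)) * ‖Ψ x‖ ^ 2
      ≤ ∫ x in cube d N, ∑ j, ∑ i, ‖Ψ' j i x‖ ^ 2 := by
  rw [integral_sum_norm_sq_eq hΨ hA]
  simp only [sum_mul]
  have hleft (j i) : Continuous fun x ↦ (A' j i x - A j i x ^ 2) * ‖Ψ x‖ ^ 2 :=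
    ((hA j i).continuous_deriv.sub ((hA j i).continuous.pow 2)).mul
      ((hΨ j i).continuous.norm.pow 2)
  have hright (j i) : Continuous fun x ↦ ‖Ψ' j i x + A j i x • Ψ x‖ ^ 2 :=
    ((hΨ j i).continuous_deriv.add ((hA j i).continuous.smul (hΨ j i).continuous)).norm.pow 2
  exact integral_mono (integrableOn_cube (by fun_prop)) (integrableOn_cube (by fun_prop))
    fun x ↦ sum_le_sum fun j _ ↦ sum_le_sum fun i _ ↦ le_add_of_nonneg_right (sq_nonneg _)

end Kinetic

end PeriodicDeriv

/-! ### Plane waves and density modes -/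

section Modes

variable {d N : ℕ}

/-- The momentum `p = 2πk`. Momenta are indexed by `k ∈ ℤ^d` throughout. -/
def mom (k : Fin d → ℤ) : Fin d → ℝ := fun i ↦ 2 * π * k i

theorem mom_zero : mom (0 : Fin d → ℤ) = 0 := by ext; simp [mom]

theorem mom_neg (k : Fin d → ℤ) : mom (-k) = -mom k := by ext; simp [mom]

theorem mom_sub (k l : Fin d → ℤ) : mom (k - l) = mom k - mom l := by ext; simp [mom, mul_sub]

theorem pSq_eq_dotProduct (k : Fin d → ℤ) : pSq d k = mom k ⬝ᵥ mom k := by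
  simp [pSq, mom, dotProduct, sq]

theorem pSq_nonneg (k : Fin d → ℤ) : 0 ≤ pSq d k := sum_nonneg fun _ _ ↦ sq_nonneg _

theorem pSq_neg (k : Fin d → ℤ) : pSq d (-k) = pSq d k := by simp [pSq]

theorem two_le_pSq {k : Fin d → ℤ} (hk : k ≠ 0) : 2 ≤ pSq d k := by
  obtain ⟨i, hi⟩ := Function.ne_iff.1 hk
  have hki : (1 : ℝ) ≤ (k i : ℝ) ^ 2 := by
    exact_mod_cast Int.one_le_abs (pow_ne_zero 2 hi) |>.trans_eq (abs_of_nonneg (sq_nonneg _))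
  have hπ : (2 : ℝ) ≤ (2 * π) ^ 2 := by nlinarith [pi_gt_three]
  calc (2 : ℝ) ≤ (2 * π * k i) ^ 2 := by rw [mul_pow]; nlinarith
    _ ≤ pSq d k := single_le_sum (f := fun i ↦ (2 * π * (k i : ℝ)) ^ 2)
        (fun _ _ ↦ sq_nonneg _) (mem_univ i)

/-- The plane wave `y ↦ e^{ip·y}` of momentum `p = 2πk`. -/
def planeWave (k : Fin d → ℤ) (y : Fin d → ℝ) : ℂ := Complex.exp ((mom k ⬝ᵥ y : ℝ) * Complex.I)

theorem norm_planeWave (k : Fin d → ℤ) (y : Fin d → ℝ) : ‖planeWave k y‖ = 1 :=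
  Complex.norm_exp_ofReal_mul_I _

theorem planeWave_zero (y : Fin d → ℝ) : planeWave 0 y = 1 := by simp [planeWave, mom_zero]

theorem planeWave_neg (k : Fin d → ℤ) (y : Fin d → ℝ) :
    planeWave (-k) y = conj (planeWave k y) := by
  simp [planeWave, ← Complex.exp_conj, mom_neg]

theorem planeWave_sub (k l : Fin d → ℤ) (y : Fin d → ℝ) :
    planeWave (k - l) y = planeWave k y * conj (planeWave l y) := by
  simp [planeWave, ← Complex.exp_conj, ← Complex.exp_add, mom_sub, sub_dotProduct, sub_mul,
    ← sub_eq_add_neg]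

theorem planeWave_sub_right (k : Fin d → ℤ) (y z : Fin d → ℝ) :
    planeWave k (y - z) = planeWave k y * conj (planeWave k z) := by
  simp [planeWave, ← Complex.exp_conj, ← Complex.exp_add, dotProduct_sub, sub_mul,
    ← sub_eq_add_neg]

theorem planeWave_add_intCast (k v : Fin d → ℤ) (y : Fin d → ℝ) :
    planeWave k (y + fun i ↦ (v i : ℝ)) = planeWave k y := by
  refine Complex.exp_eq_exp_iff_exists_int.2 ⟨∑ i, k i * v i, ?_⟩
  simp only [dotProduct_add, Complex.ofReal_add, add_mul, add_right_inj]
  simp only [mom, dotProduct, Complex.ofReal_sum, Int.cast_sum, sum_mul]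
  refine sum_congr rfl fun i _ ↦ ?_
  push_cast
  ring

theorem contDiff_planeWave (k : Fin d → ℤ) {n : WithTop ℕ∞} : ContDiff ℝ n (planeWave k) := by
  have hphase : ContDiff ℝ n fun y : Fin d → ℝ ↦ mom k ⬝ᵥ y :=
    ContDiff.sum fun i _ ↦ contDiff_const.mul (contDiff_apply ℝ ℝ i)
  exact ((Complex.ofRealCLM.contDiff.comp hphase).mul contDiff_const).cexp

theorem hasPeriodicDeriv_planeWave (k : Fin d → ℤ) (j l : Fin N) (i : Fin d) :
    HasPeriodicDeriv j i (fun x ↦ planeWave k (x l))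
      fun x ↦ if l = j then Complex.I * mom k i * planeWave k (x j) else 0 where
  continuous := (contDiff_planeWave k (n := 0)).continuous.comp (continuous_apply l)
  continuous_deriv := by
    split_ifs
    · exact continuous_const.mul
        ((contDiff_planeWave k (n := 0)).continuous.comp (continuous_apply j))
    · exact continuous_const
  periodic x := by
    simp only [add_coordVec_eq_update]
    by_cases h : l = j
    · subst h
      have hsingle : (Pi.single i 1 : Fin d → ℝ) = fun a ↦ ((Pi.single i 1 : Fin d → ℤ) a : ℝ) := by
        ext a; simp [Pi.single_apply]
      rw [Function.update_self, hsingle, planeWave_add_intCast]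
    · simp [h]
  hasLineDerivAt x := by
    by_cases h : l = j
    · subst h
      have hphase :
          HasDerivAt (fun t : ℝ ↦ mom k ⬝ᵥ (x + t • coordVec l i) l) (mom k i) 0 := by
        simpa [coordVec, dotProduct_add, dotProduct_smul] using
          ((hasDerivAt_id (0 : ℝ)).mul_const (mom k i)).const_add (mom k ⬝ᵥ x l)
      have := (hphase.ofReal_comp.mul_const Complex.I).cexp
      simpa [HasLineDerivAt, planeWave, mul_comm, mul_left_comm] using this
    · simpa [HasLineDerivAt, coordVec, h] using hasDerivAt_const (0 : ℝ) (planeWave k (x l))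

/-- The density mode `ρ_p = ∑_j e^{ip·x_j}`. -/
def densityMode (k : Fin d → ℤ) (x : Config d N) : ℂ := ∑ j, planeWave k (x j)

theorem densityMode_zero (x : Config d N) : densityMode 0 x = N := by
  simp [densityMode, planeWave_zero]

theorem densityMode_neg (k : Fin d → ℤ) (x : Config d N) :
    densityMode (-k) x = conj (densityMode k x) := by
  simp [densityMode, planeWave_neg]

theorem contDiff_densityMode (k : Fin d → ℤ) {n : WithTop ℕ∞} :
    ContDiff ℝ n (densityMode k : Config d N → ℂ) :=
  ContDiff.sum fun j _ ↦ (contDiff_planeWave k).comp (contDiff_apply ℝ (Fin d → ℝ) j)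

theorem continuous_densityMode (k : Fin d → ℤ) : Continuous (densityMode k : Config d N → ℂ) :=
  (contDiff_densityMode k (n := 0)).continuous

theorem densityMode_update_add_intCast (k v : Fin d → ℤ) (x : Config d N) (j : Fin N) :
    densityMode k (Function.update x j (x j + fun i ↦ (v i : ℝ))) = densityMode k x := by
  refine sum_congr rfl fun l _ ↦ ?_
  by_cases h : l = j
  · subst h; simp [planeWave_add_intCast]
  · simp [h]

theorem densityMode_comp_perm (k : Fin d → ℤ) (σ : Equiv.Perm (Fin N)) (x : Config d N) :
    densityMode k (x ∘ σ) = densityMode k x :=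
  Equiv.sum_comp σ fun j ↦ planeWave k (x j)

theorem hasPeriodicDeriv_densityMode (k : Fin d → ℤ) (j : Fin N) (i : Fin d) :
    HasPeriodicDeriv j i (densityMode k) fun x ↦ Complex.I * mom k i * planeWave k (x j) :=
  (HasPeriodicDeriv.sum fun l _ ↦ hasPeriodicDeriv_planeWave k j l i).congr_deriv
    fun x ↦ by simp

/-- The density mode `∑_l e^{ip·(x_l - x_j)}` seen from the `j`-th particle. -/
def relMode (k : Fin d → ℤ) (j : Fin N) (x : Config d N) : ℂ :=
  densityMode k x * conj (planeWave k (x j))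

theorem relMode_neg (k : Fin d → ℤ) (j : Fin N) (x : Config d N) :
    relMode (-k) j x = conj (relMode k j x) := by
  simp [relMode, densityMode_neg, planeWave_neg]

theorem norm_relMode (k : Fin d → ℤ) (j : Fin N) (x : Config d N) :
    ‖relMode k j x‖ = ‖densityMode k x‖ := by
  simp [relMode, norm_planeWave]

theorem sum_relMode (k : Fin d → ℤ) (x : Config d N) :
    ∑ j, relMode k j x = ((‖densityMode k x‖ ^ 2 : ℝ) : ℂ) := by
  simp only [relMode, ← mul_sum, ← map_sum]
  exact_mod_cast Complex.mul_conj' (densityMode k x)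

theorem sum_relMode_mul_conj (k l : Fin d → ℤ) (x : Config d N) :
    ∑ j, relMode k j x * conj (relMode l j x)
      = densityMode k x * conj (densityMode l x) * densityMode (l - k) x := by
  simp only [relMode, map_mul, Complex.conj_conj, densityMode, mul_sum, planeWave_sub]
  exact sum_congr rfl fun j _ ↦ by ring

theorem hasPeriodicDeriv_relMode (k : Fin d → ℤ) (j : Fin N) (i : Fin d) :
    HasPeriodicDeriv j i (relMode k j) fun x ↦ Complex.I * mom k i * (1 - relMode k j x) := by
  refine ((hasPeriodicDeriv_densityMode k j i).mul ((hasPeriodicDeriv_planeWave k j j i).clm_comp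
    Complex.conjCLE.toContinuousLinearMap)).congr_deriv fun x ↦ ?_
  have hone : planeWave k (x j) * conj (planeWave k (x j)) = 1 := by
    simp [Complex.mul_conj', norm_planeWave]
  simp only [ContinuousLinearEquiv.coe_coe, ContinuousAlgEquiv.coeCLE_apply,
    Complex.conjCAE_apply, ↓reduceIte, map_mul, Complex.conj_I, Complex.conj_ofReal, neg_mul,
    mul_neg, relMode]
  linear_combination Complex.I * mom k i * hone

theorem hasPeriodicDeriv_norm_densityMode_sq (k : Fin d → ℤ) (j : Fin N) (i : Fin d) :
    HasPeriodicDeriv j i (fun x ↦ ‖densityMode k x‖ ^ 2)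
      fun x ↦ 2 * mom k i * (relMode k j x).im := by
  refine (hasPeriodicDeriv_densityMode k j i).norm_sq.congr_deriv fun x ↦ ?_
  simp only [Complex.inner, Complex.mul_re, Complex.I_re, Complex.ofReal_re, zero_mul,
    Complex.I_im, Complex.ofReal_im, mul_zero, sub_self, Complex.mul_im, one_mul, zero_add,
    zero_sub, Complex.conj_re, neg_mul, Complex.conj_im, mul_neg, sub_neg_eq_add, relMode]
  ring

/-- The weighted sum `∑_{p ∈ S} a_p |ρ_p|²/N` of the normalized squared density modes. -/
def fluctuation (S : Finset (Fin d → ℤ)) (a : (Fin d → ℤ) → ℝ) (x : Config d N) : ℝ :=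
  ∑ p ∈ S, a p * (‖densityMode p x‖ ^ 2 / N)

section Fluctuation

variable {S T : Finset (Fin d → ℤ)} {a b : (Fin d → ℤ) → ℝ}

theorem continuous_fluctuation : Continuous (fluctuation S a : Config d N → ℝ) :=
  continuous_finsetSum _ fun p _ ↦
    continuous_const.mul (((continuous_densityMode p).norm.pow 2).div_const _)

theorem natCast_mul_fluctuation (x : Config d N) :
    N * fluctuation S a x = ∑ p ∈ S, a p * ‖densityMode p x‖ ^ 2 := by
  rw [fluctuation, mul_sum]
  refine sum_congr rfl fun p _ ↦ ?_
  obtain rfl | hN := eq_or_ne N 0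
  · simp [densityMode]
  · field_simp

theorem fluctuation_le_fluctuation (h : ∀ p ∈ S, a p ≤ b p) (x : Config d N) :
    fluctuation S a x ≤ fluctuation S b x :=
  sum_le_sum fun p hp ↦ mul_le_mul_of_nonneg_right (h p hp) (by positivity)

theorem fluctuation_nonneg (ha : ∀ p ∈ S, 0 ≤ a p) (x : Config d N) : 0 ≤ fluctuation S a x :=
  sum_nonneg fun p hp ↦ mul_nonneg (ha p hp) (by positivity)

theorem mul_norm_densityMode_sq_div_le_fluctuation (ha : ∀ p ∈ S, 0 ≤ a p) {p : Fin d → ℤ}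
    (hp : p ∈ S) (x : Config d N) : a p * (‖densityMode p x‖ ^ 2 / N) ≤ fluctuation S a x :=
  single_le_sum (f := fun p ↦ a p * (‖densityMode p x‖ ^ 2 / N))
    (fun p hp ↦ mul_nonneg (ha p hp) (by positivity)) hp

theorem norm_densityMode_sq_div_le_fluctuation_one {p : Fin d → ℤ} (hp : p ∈ S)
    (x : Config d N) : ‖densityMode p x‖ ^ 2 / N ≤ fluctuation S 1 x := by
  simpa using mul_norm_densityMode_sq_div_le_fluctuation (a := 1) (fun _ _ ↦ zero_le_one) hp x

theorem fluctuation_le_sum_mul (ha : ∀ p ∈ S, 0 ≤ a p) (hST : S ⊆ T) (x : Config d N) :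
    fluctuation S a x ≤ (∑ p ∈ S, a p) * fluctuation T 1 x := by
  rw [sum_mul]
  exact sum_le_sum fun p hp ↦ mul_le_mul_of_nonneg_left
    (norm_densityMode_sq_div_le_fluctuation_one (hST hp) x) (ha p hp)

end Fluctuation

end Modes

/-! ### The Jastrow exponent -/

section Jastrow

variable {d N : ℕ} (S : Finset (Fin d → ℤ)) (c : (Fin d → ℤ) → ℝ)

/-- The Jastrow exponent `F = (2N)⁻¹ ∑_{p ∈ S} c_p |ρ_p|²`. -/
def jastrow (x : Config d N) : ℝ := fluctuation S c x / 2

/-- The partial derivative of `jastrow` in the `i`-th coordinate of the `j`-th particle. -/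
def jastrowGrad (j : Fin N) (i : Fin d) (x : Config d N) : ℝ :=
  (N : ℝ)⁻¹ * ∑ p ∈ S, c p * mom p i * (relMode p j x).im

/-- The second partial derivative of `jastrow` in the `i`-th coordinate of the `j`-th particle. -/
def jastrowHess (j : Fin N) (i : Fin d) (x : Config d N) : ℝ :=
  (N : ℝ)⁻¹ * ∑ p ∈ S, c p * mom p i ^ 2 * (1 - (relMode p j x).re)

theorem contDiff_jastrow {n : WithTop ℕ∞} : ContDiff ℝ n (jastrow S c : Config d N → ℝ) :=
  (ContDiff.sum fun p _ ↦
    contDiff_const.mul (((contDiff_densityMode p).norm_sq ℝ).div_const _)).div_const _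

theorem jastrow_update_add_intCast (x : Config d N) (j : Fin N) (v : Fin d → ℤ) :
    jastrow S c (Function.update x j (x j + fun i ↦ (v i : ℝ))) = jastrow S c x := by
  simp only [jastrow, fluctuation, densityMode_update_add_intCast]

theorem jastrow_comp_perm (σ : Equiv.Perm (Fin N)) (x : Config d N) :
    jastrow S c (x ∘ σ) = jastrow S c x := by
  simp only [jastrow, fluctuation, densityMode_comp_perm]

theorem hasPeriodicDeriv_jastrow (j : Fin N) (i : Fin d) :
    HasPeriodicDeriv j i (jastrow S c) (jastrowGrad S c j i) := by
  have h := HasPeriodicDeriv.sum (s := S) fun p _ ↦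
    (hasPeriodicDeriv_norm_densityMode_sq p j i).const_smul (c p / (2 * N))
  convert h using 2 with x
  · rw [jastrow, fluctuation, sum_div]
    exact sum_congr rfl fun p _ ↦ by rw [smul_eq_mul]; ring
  · rw [jastrowGrad, mul_sum]
    exact sum_congr rfl fun p _ ↦ by rw [smul_eq_mul]; ring

theorem hasPeriodicDeriv_jastrowGrad (j : Fin N) (i : Fin d) :
    HasPeriodicDeriv j i (jastrowGrad S c j i) (jastrowHess S c j i) := by
  refine ((HasPeriodicDeriv.sum fun p _ ↦ ((hasPeriodicDeriv_relMode p j i).clm_comp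
    Complex.imCLM).const_smul (c p * mom p i)).const_smul (N : ℝ)⁻¹).congr_deriv fun x ↦ ?_
  simp only [jastrowHess, smul_eq_mul]
  congr 1
  refine sum_congr rfl fun p _ ↦ ?_
  rw [Complex.imCLM_apply, mul_assoc Complex.I, Complex.I_mul_im, Complex.re_ofReal_mul,
    Complex.sub_re, Complex.one_re]
  ring

theorem sum_jastrowHess [NeZero N] (x : Config d N) :
    ∑ j, ∑ i, jastrowHess S c j i x
      = ∑ p ∈ S, c p * pSq d p - fluctuation S (fun p ↦ c p * pSq d p) x := by
  have hre (p : Fin d → ℤ) : ∑ j, (1 - (relMode p j x).re) = N - ‖densityMode p x‖ ^ 2 := by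
    rw [sum_sub_distrib, ← Complex.re_sum, sum_relMode, Complex.ofReal_re]
    simp
  simp only [jastrowHess, ← mul_sum]
  rw [sum_congr rfl fun j _ ↦ sum_comm, sum_comm, fluctuation, ← sum_sub_distrib, mul_sum]
  refine sum_congr rfl fun p _ ↦ ?_
  have hN : (N : ℝ) ≠ 0 := NeZero.ne _
  calc (N : ℝ)⁻¹ * ∑ j, ∑ i, c p * mom p i ^ 2 * (1 - (relMode p j x).re)
      = (N : ℝ)⁻¹ * (c p * pSq d p * (N - ‖densityMode p x‖ ^ 2)) := by
        simp only [← sum_mul, ← mul_sum, hre]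
        rfl
    _ = _ := by field_simp

/-- The sum of the off-diagonal terms in `|∇F|²`, taken in absolute value. -/
def cubicRemainder (x : Config d N) : ℝ :=
  ((N : ℝ) ^ 2)⁻¹ * ∑ p ∈ S, ∑ q ∈ S.erase p, |c p * c q * (mom p ⬝ᵥ mom q)| *
    (‖densityMode p x‖ * ‖densityMode q x‖ * ‖densityMode (q - p) x‖)

theorem sum_jastrowGrad_sq_le (x : Config d N) :
    ∑ j, ∑ i, jastrowGrad S c j i x ^ 2
      ≤ #S * fluctuation S (fun p ↦ c p ^ 2 * pSq d p) x := by
  have hgrad (j : Fin N) (i : Fin d) : jastrowGrad S c j i x ^ 2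
      ≤ ((N : ℝ) ^ 2)⁻¹ * (#S * ∑ p ∈ S, c p ^ 2 * mom p i ^ 2 * ‖densityMode p x‖ ^ 2) := by
    rw [jastrowGrad, mul_pow, inv_pow]
    gcongr
    refine sq_sum_le_card_mul_sum_sq.trans ?_
    gcongr with p
    rw [mul_pow, mul_pow, ← norm_relMode p j x]
    gcongr ?_ * ?_
    exact sq_le_sq' (neg_le_of_abs_le (Complex.abs_im_le_norm _)) (Complex.im_le_norm _)
  calc ∑ j, ∑ i, jastrowGrad S c j i x ^ 2
      ≤ ∑ _j : Fin N, ∑ i, ((N : ℝ) ^ 2)⁻¹ *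
          (#S * ∑ p ∈ S, c p ^ 2 * mom p i ^ 2 * ‖densityMode p x‖ ^ 2) :=
        sum_le_sum fun j _ ↦ sum_le_sum fun i _ ↦ hgrad j i
    _ = N * (((N : ℝ) ^ 2)⁻¹ * (#S * ∑ p ∈ S, c p ^ 2 * pSq d p * ‖densityMode p x‖ ^ 2)) := by
        simp only [← mul_sum, sum_const, card_univ, Fintype.card_fin, nsmul_eq_mul, pSq]
        rw [sum_comm]
        simp only [mom, mul_sum, sum_mul]
        exact sum_congr rfl fun p _ ↦ sum_congr rfl fun i _ ↦ by ring
    _ = _ := by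
        rw [← natCast_mul_fluctuation]
        obtain rfl | hN := eq_or_ne N 0
        · simp [fluctuation]
        · field_simp

variable {S c}

-- The reflection `p ↦ -p` of `S` annihilates the real parts of the relative modes.
theorem ofReal_jastrowGrad (hS : ∀ p ∈ S, -p ∈ S) (hc : ∀ p, c (-p) = c p) (j : Fin N) (i : Fin d)
    (x : Config d N) :
    (jastrowGrad S c j i x : ℂ)
      = -Complex.I * (N : ℂ)⁻¹ * ∑ p ∈ S, (c p * mom p i : ℝ) * relMode p j x := by
  have hre : ∑ p ∈ S, c p * mom p i * (relMode p j x).re = 0 := by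
    have hneg : ∑ p ∈ S, c p * mom p i * (relMode p j x).re
        = -∑ p ∈ S, c p * mom p i * (relMode p j x).re := by
      rw [← sum_neg_distrib]
      refine sum_nbij' (-·) (-·) hS hS (by simp) (by simp) fun p _ ↦ ?_
      simp [hc, mom_neg, relMode_neg]
    linarith
  have hsum : ∑ p ∈ S, (c p * mom p i : ℝ) * relMode p j x
      = Complex.I * ((∑ p ∈ S, c p * mom p i * (relMode p j x).im : ℝ) : ℂ) := by
    apply Complex.ext <;> simp [hre]
  rw [hsum, jastrowGrad]
  push_cast
  linear_combination (N : ℂ)⁻¹ * (∑ p ∈ S, (c p * mom p i * (relMode p j x).im : ℂ)) * Complex.I_sq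

theorem ofReal_sum_jastrowGrad_sq (hS : ∀ p ∈ S, -p ∈ S) (hc : ∀ p, c (-p) = c p)
    (x : Config d N) :
    ((∑ j, ∑ i, jastrowGrad S c j i x ^ 2 : ℝ) : ℂ)
      = ((N : ℂ) ^ 2)⁻¹ * ∑ p ∈ S, ∑ q ∈ S, (c p * c q * (mom p ⬝ᵥ mom q) : ℝ) *
        (densityMode p x * conj (densityMode q x) * densityMode (q - p) x) := by
  have hsq (j i) : ((jastrowGrad S c j i x ^ 2 : ℝ) : ℂ) = ((N : ℂ) ^ 2)⁻¹ * ∑ p ∈ S, ∑ q ∈ S,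
      (c p * c q * (mom p i * mom q i) : ℝ) * (relMode p j x * conj (relMode q j x)) := by
    rw [sq, Complex.ofReal_mul]
    nth_rw 2 [← Complex.conj_ofReal]
    rw [ofReal_jastrowGrad hS hc]
    simp only [map_mul, map_sum, map_neg, map_inv₀, Complex.conj_I, Complex.conj_ofReal,
      Complex.conj_natCast]
    rw [mul_mul_mul_comm, sum_mul_sum]
    congr 1
    · linear_combination -((N : ℂ) ^ 2)⁻¹ * Complex.I_sq
    · refine sum_congr rfl fun p _ ↦ sum_congr rfl fun q _ ↦ ?_
      push_cast
      ring
  simp only [Complex.ofReal_sum, hsq, ← mul_sum]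
  congr 1
  rw [sum_congr rfl fun j _ ↦ sum_comm, sum_comm]
  refine sum_congr rfl fun p _ ↦ ?_
  rw [sum_congr rfl fun j _ ↦ sum_comm, sum_comm]
  refine sum_congr rfl fun q _ ↦ ?_
  rw [← sum_relMode_mul_conj, mul_sum, dotProduct, mul_sum, Complex.ofReal_sum]
  exact sum_congr rfl fun j _ ↦ (sum_mul ..).symm

theorem abs_sum_jastrowGrad_sq_sub_le (hS : ∀ p ∈ S, -p ∈ S) (hc : ∀ p, c (-p) = c p)
    (x : Config d N) :
    |∑ j, ∑ i, jastrowGrad S c j i x ^ 2 - fluctuation S (fun p ↦ c p ^ 2 * pSq d p) x|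
      ≤ cubicRemainder S c x := by
  let term (p q : Fin d → ℤ) : ℂ := (c p * c q * (mom p ⬝ᵥ mom q) : ℝ) *
    (densityMode p x * conj (densityMode q x) * densityMode (q - p) x)
  have hdiag : ((N : ℂ) ^ 2)⁻¹ * ∑ p ∈ S, term p p
      = (fluctuation S (fun p ↦ c p ^ 2 * pSq d p) x : ℂ) := by
    rw [fluctuation, mul_sum, Complex.ofReal_sum]
    refine sum_congr rfl fun p _ ↦ ?_
    simp only [term, sub_self, densityMode_zero, Complex.mul_conj', pSq_eq_dotProduct]
    push_cast
    field_simp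
  have hoff : ((∑ j, ∑ i, jastrowGrad S c j i x ^ 2
        - fluctuation S (fun p ↦ c p ^ 2 * pSq d p) x : ℝ) : ℂ)
      = ((N : ℂ) ^ 2)⁻¹ * ∑ p ∈ S, ∑ q ∈ S.erase p, term p q := by
    rw [Complex.ofReal_sub, ofReal_sum_jastrowGrad_sq hS hc, ← hdiag, ← mul_sub]
    congr 1
    exact (sum_sub_distrib ..).symm.trans <| sum_congr rfl fun p hp ↦ by
      rw [← add_sum_erase S (term p) hp, add_sub_cancel_left]
  rw [← Real.norm_eq_abs, ← Complex.norm_real, hoff, norm_mul, cubicRemainder, norm_inv, norm_pow,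
    Complex.norm_natCast]
  gcongr
  refine (norm_sum_le _ _).trans <| sum_le_sum fun p _ ↦ (norm_sum_le _ _).trans <|
    sum_le_sum fun q _ ↦ le_of_eq ?_
  simp only [term, norm_mul, Complex.norm_real, Real.norm_eq_abs, RCLike.norm_conj,
    abs_mul]

end Jastrow

/-! ### The pair potential in Fourier space -/

section Potential

variable {d N : ℕ}

theorem norm_densityMode_sq (k : Fin d → ℤ) (x : Config d N) :
    ‖densityMode k x‖ ^ 2 = ∑ j, ∑ l, (planeWave k (x j - x l)).re := by
  have h := Complex.mul_conj' (densityMode k x)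
  simp only [densityMode, map_sum, sum_mul_sum, ← planeWave_sub_right] at h
  simpa [densityMode, ← Complex.ofReal_pow] using (congrArg Complex.re h).symm

theorem integral_planeWave_sub {k : Fin d → ℤ} (hk : k ≠ 0) {j l : Fin N} (hjl : j ≠ l) :
    ∫ x in cube d N, planeWave k (x j - x l) = 0 := by
  obtain ⟨i, hi⟩ := Function.ne_iff.1 hk
  have hmom : Complex.I * mom k i ≠ 0 :=
    mul_ne_zero Complex.I_ne_zero <| Complex.ofReal_ne_zero.2 <|
      mul_ne_zero two_pi_pos.ne' (Int.cast_ne_zero.2 hi)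
  have h := ((hasPeriodicDeriv_planeWave k j j i).mul ((hasPeriodicDeriv_planeWave k j l i).clm_comp
    Complex.conjCLE.toContinuousLinearMap)).integral_eq_zero
  simp only [if_pos, if_neg hjl.symm, map_zero, mul_zero, add_zero, mul_assoc,
    integral_const_mul] at h
  simp only [planeWave_sub_right]
  exact (mul_eq_zero.1 (by simpa [mul_assoc] using h)).resolve_left hmom

theorem integral_norm_densityMode_sq {k : Fin d → ℤ} (hk : k ≠ 0) :
    ∫ x in cube d N, ‖densityMode k x‖ ^ 2 = N := by
  have hcont (j l : Fin N) : Continuous fun x : Config d N ↦ planeWave k (x j - x l) :=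
    (contDiff_planeWave k (n := 0)).continuous.comp (by fun_prop)
  have hrecont (j l : Fin N) : Continuous fun x : Config d N ↦ (planeWave k (x j - x l)).re :=
    Complex.continuous_re.comp (hcont j l)
  have hre (j l : Fin N) :
      ∫ x in cube d N, (planeWave k (x j - x l)).re = if j = l then 1 else 0 := by
    split_ifs with h
    · subst h
      simp [planeWave]
    · have := integral_re (𝕜 := ℂ) (integrableOn_cube (hcont j l)).integrable
      simpa [integral_planeWave_sub hk h] using this
  simp only [norm_densityMode_sq]
  rw [integral_finsetSum _ fun j _ ↦ integrableOn_cube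
    (continuous_finsetSum _ fun l _ ↦ hrecont j l)]
  simp_rw [integral_finsetSum _ fun l _ ↦ integrableOn_cube (hrecont _ l), hre]
  simp

theorem integral_norm_densityMode_le {k : Fin d → ℤ} (hk : k ≠ 0) :
    ∫ x in cube d N, ‖densityMode k x‖ ≤ √N := by
  have hcont : Continuous fun x : Config d N ↦ ‖densityMode k x‖ := (continuous_densityMode k).norm
  refine Real.le_sqrt_of_sq_le ?_
  rw [← integral_norm_densityMode_sq hk]
  exact (even_two.convexOn_pow (𝕜 := ℝ)).map_integral_le (continuousOn_pow 2) isClosed_univ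
    (by simp) (integrableOn_cube hcont) (integrableOn_cube (hcont.pow 2))

theorem integral_fluctuation [NeZero N] {S : Finset (Fin d → ℤ)} (hS : 0 ∉ S)
    (a : (Fin d → ℤ) → ℝ) :
    ∫ x in cube d N, fluctuation S a x = ∑ p ∈ S, a p := by
  have hcont (p : Fin d → ℤ) : Continuous fun x : Config d N ↦ a p * (‖densityMode p x‖ ^ 2 / N) :=
    continuous_const.mul (((continuous_densityMode p).norm.pow 2).div_const _)
  simp only [fluctuation]
  rw [integral_finsetSum _ fun p _ ↦ integrableOn_cube (hcont p)]
  refine sum_congr rfl fun p hp ↦ ?_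
  rw [integral_const_mul, integral_div, integral_norm_densityMode_sq (ne_of_mem_of_not_mem hp hS),
    div_self (NeZero.ne _), mul_one]

/-- The total pair interaction `∑_{j<k} w(x_j - x_k)`. -/
def pairPotential (w : (Fin d → ℝ) → ℝ) (x : Config d N) : ℝ :=
  ∑ j, ∑ k, if j < k then w (x j - x k) else 0

theorem continuous_pairPotential {w : (Fin d → ℝ) → ℝ} (hw : Continuous w) :
    Continuous (pairPotential w : Config d N → ℝ) :=
  continuous_finsetSum _ fun j _ ↦ continuous_finsetSum _ fun k _ ↦
    continuous_if_const _ (fun _ ↦ hw.comp (by fun_prop)) fun _ ↦ continuous_const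

theorem sum_sum_eq_two_mul_sum_lt_add {ι R : Type*} [Fintype ι] [LinearOrder ι]
    [NonAssocSemiring R] {f : ι → ι → R} (hf : ∀ i j, f i j = f j i) :
    ∑ i, ∑ j, f i j = 2 * (∑ i, ∑ j, if i < j then f i j else 0) + ∑ i, f i i := by
  have hsplit (i j : ι) : f i j = (if i < j then f i j else 0) + (if j < i then f j i else 0)
      + if i = j then f i j else 0 := by
    rcases lt_trichotomy i j with h | h | h
    · simp [h, h.not_gt, h.ne]
    · simp [h]
    · simp [h, h.not_gt, h.ne', hf i j]
  rw [sum_congr rfl fun i _ ↦ sum_congr rfl fun j _ ↦ hsplit i j]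
  simp only [sum_add_distrib]
  rw [sum_comm (f := fun i j ↦ if j < i then f j i else 0), two_mul]
  simp

variable {hw : (Fin d → ℤ) → ℝ}

theorem hasSum_wOf (hs : Summable hw) (y : Fin d → ℝ) :
    HasSum (fun k ↦ hw k * (planeWave k y).re) (wOf d hw y) := by
  have hsum : Summable fun k ↦ (hw k : ℂ) * planeWave k y :=
    .of_norm <| by simpa [norm_planeWave] using hs.norm
  have h := Complex.hasSum_re hsum.hasSum
  simp only [Complex.re_ofReal_mul] at h
  convert h using 1
  simp only [wOf, planeWave, mom, dotProduct, mul_comm Complex.I]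

theorem continuous_wOf (hs : Summable hw) : Continuous (wOf d hw) := by
  rw [funext fun y ↦ (hasSum_wOf hs y).tsum_eq.symm]
  refine continuous_tsum (fun k ↦ continuous_const.mul
    (Complex.continuous_re.comp (contDiff_planeWave k (n := 0)).continuous)) hs.norm fun k y ↦ ?_
  rw [norm_mul]
  exact mul_le_of_le_one_right (norm_nonneg _)
    ((Complex.abs_re_le_norm _).trans (norm_planeWave k y).le)

theorem hasSum_mul_norm_densityMode_sq (hs : Summable hw) (x : Config d N) :
    HasSum (fun k ↦ hw k * ‖densityMode k x‖ ^ 2)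
      (2 * pairPotential (wOf d hw) x + N * ∑' k, hw k) := by
  have hsymm (j l : Fin N) : wOf d hw (x j - x l) = wOf d hw (x l - x j) := by
    rw [← (hasSum_wOf hs _).tsum_eq, ← (hasSum_wOf hs _).tsum_eq]
    simp [planeWave_sub_right, mul_comm]
  have hdiag (j : Fin N) : wOf d hw (x j - x j) = ∑' k, hw k := by
    rw [← (hasSum_wOf hs _).tsum_eq]
    simp [planeWave]
  have hpairs : 2 * pairPotential (wOf d hw) x + N * ∑' k, hw k
      = ∑ j, ∑ l, wOf d hw (x j - x l) := by
    rw [sum_sum_eq_two_mul_sum_lt_add hsymm]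
    simp only [pairPotential, hdiag, sum_const, card_univ, Fintype.card_fin, nsmul_eq_mul]
  simp only [hpairs, norm_densityMode_sq, mul_sum]
  exact hasSum_sum fun j _ ↦ hasSum_sum fun l _ ↦ hasSum_wOf hs _

/-- The contribution `∑_{p ∉ S ∪ {0}} ŵ(p)|ρ_p|²` to twice the pair interaction. -/
def tailPotential (hw : (Fin d → ℤ) → ℝ) (S : Finset (Fin d → ℤ)) (x : Config d N) : ℝ :=
  ∑' k : {k // k ∉ insert 0 S}, hw k * ‖densityMode k.1 x‖ ^ 2

theorem tailPotential_nonneg (h0 : ∀ k, 0 ≤ hw k) (S : Finset (Fin d → ℤ)) (x : Config d N) :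
    0 ≤ tailPotential hw S x :=
  tsum_nonneg fun k ↦ mul_nonneg (h0 k) (sq_nonneg _)

variable {S : Finset (Fin d → ℤ)}

theorem two_mul_pairPotential (hs : Summable hw) (hS : 0 ∉ S) (x : Config d N) :
    2 * pairPotential (wOf d hw) x = hw 0 * N ^ 2 + N * fluctuation S hw x
      + tailPotential hw S x - N * ∑' k, hw k := by
  have h := hasSum_mul_norm_densityMode_sq hs x
  have hsplit := h.summable.sum_add_tsum_subtype_compl (insert 0 S)
  rw [h.tsum_eq, sum_insert hS, densityMode_zero, Complex.norm_natCast,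
    ← natCast_mul_fluctuation] at hsplit
  rw [tailPotential]
  linarith

theorem continuous_tailPotential (hs : Summable hw) (hS : 0 ∉ S) :
    Continuous (tailPotential hw S : Config d N → ℝ) := by
  have h : (tailPotential hw S : Config d N → ℝ) = fun x ↦ 2 * pairPotential (wOf d hw) x
      - hw 0 * N ^ 2 - N * fluctuation S hw x + N * ∑' k, hw k := by
    ext x
    linarith [two_mul_pairPotential hs hS x]
  have hV := continuous_pairPotential (N := N) (continuous_wOf hs)
  have hfl := continuous_fluctuation (N := N) (S := S) (a := hw)
  rw [h]
  fun_prop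

theorem integral_tailPotential (hs : Summable hw) (hS : 0 ∉ S) :
    ∫ x in cube d N, tailPotential hw S x = N * (∑' k, hw k - hw 0 - ∑ p ∈ S, hw p) := by
  have hk (k : {k // k ∉ insert 0 S}) : k.1 ≠ 0 := fun h ↦ k.2 (by simp [h])
  have htail : ∑' k : {k // k ∉ insert 0 S}, hw k = ∑' k, hw k - hw 0 - ∑ p ∈ S, hw p := by
    linarith [hs.sum_add_tsum_subtype_compl (insert 0 S), sum_insert (f := hw) hS]
  have hint (k : {k // k ∉ insert 0 S}) :
      ∫ x in cube d N, hw k * ‖densityMode k.1 x‖ ^ 2 = N * hw k := by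
    rw [integral_const_mul, integral_norm_densityMode_sq (hk k), mul_comm]
  have hnorm (k : {k // k ∉ insert 0 S}) :
      ∫ x in cube d N, ‖hw k * ‖densityMode k.1 x‖ ^ 2‖ = N * ‖hw k‖ := by
    simp only [norm_mul, norm_pow, norm_norm]
    rw [integral_const_mul, integral_norm_densityMode_sq (hk k), mul_comm]
  have hsub : Summable fun k : {k // k ∉ insert 0 S} ↦ ‖hw k‖ := hs.norm.subtype _
  have h := integral_tsum_of_summable_integral_norm (μ := volume.restrict (cube d N))
    (F := fun (k : {k // k ∉ insert 0 S}) x ↦ hw k * ‖densityMode k.1 x‖ ^ 2)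
    (fun k ↦ integrableOn_cube (continuous_const.mul ((continuous_densityMode _).norm.pow 2)))
    (by simpa only [hnorm] using hsub.mul_left _)
  rw [← htail, ← tsum_mul_left]
  simpa only [hint, tailPotential] using h.symm

end Potential

/-! ### The energy of an admissible wave function -/

section Admissible

variable {d N : ℕ} {Ψ : Config d N → ℂ}

theorem IsAdmissible.hasPeriodicDeriv (hΨ : IsAdmissible d N Ψ) (j : Fin N) (i : Fin d) :
    HasPeriodicDeriv j i Ψ fun x ↦ fderiv ℝ Ψ x (Pi.single j (Pi.single i 1)) where
  continuous := hΨ.1.continuous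
  continuous_deriv := (hΨ.1.continuous_fderiv (by simp)).clm_apply continuous_const
  periodic x := by
    rw [add_coordVec_eq_update, ← hΨ.2.1 x j (Pi.single i 1)]
    congr 3
    ext a
    simp [Pi.single_apply]
  hasLineDerivAt x := ((hΨ.1.differentiable (by simp)) x).hasFDerivAt.hasLineDerivAt _

/-- The kinetic energy `∫ ∑_j |∇_j Ψ|²`. -/
def kineticEnergy (Ψ : Config d N → ℂ) : ℝ :=
  ∫ x in cube d N, ∑ j, ∑ i, ‖fderiv ℝ Ψ x (Pi.single j (Pi.single i 1))‖ ^ 2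

theorem IsAdmissible.energy_eq (hΨ : IsAdmissible d N Ψ) (lam : ℝ) {w : (Fin d → ℝ) → ℝ}
    (hw : Continuous w) :
    energy d N lam w Ψ
      = kineticEnergy Ψ + ∫ x in cube d N, lam * pairPotential w x * ‖Ψ x‖ ^ 2 :=
  integral_add
    (integrableOn_cube <| continuous_finsetSum _ fun j _ ↦ continuous_finsetSum _ fun i _ ↦
      (hΨ.hasPeriodicDeriv j i).continuous_deriv.norm.pow 2)
    (integrableOn_cube <| (continuous_const.mul (continuous_pairPotential hw)).mul
      (hΨ.1.continuous.norm.pow 2))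

theorem IsAdmissible.le_energy_of_le (hΨ : IsAdmissible d N Ψ) {lam C a b : ℝ}
    {w : (Fin d → ℝ) → ℝ} (hw : Continuous w) {Q₁ Q₂ : Config d N → ℝ} (hQ₁ : Continuous Q₁)
    (hQ₂ : Continuous Q₂) (h₁ : ∫ x in cube d N, Q₁ x * ‖Ψ x‖ ^ 2 ≤ kineticEnergy Ψ)
    (h₂ : ∫ x in cube d N, Q₂ x * ‖Ψ x‖ ^ 2 ≤ kineticEnergy Ψ)
    (ha : 0 ≤ a) (hb : 0 ≤ b) (hab : a + b = 1)
    (hC : ∀ x, C ≤ a * Q₁ x + b * Q₂ x + lam * pairPotential w x) :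
    C ≤ energy d N lam w Ψ := by
  have hΨ2 : Continuous fun x ↦ ‖Ψ x‖ ^ 2 := hΨ.1.continuous.norm.pow 2
  have hV : Continuous fun x : Config d N ↦ lam * pairPotential w x :=
    continuous_const.mul (continuous_pairPotential hw)
  calc C = ∫ x in cube d N, C * ‖Ψ x‖ ^ 2 := by rw [integral_const_mul, hΨ.2.2.2, mul_one]
    _ ≤ ∫ x in cube d N, (a * (Q₁ x * ‖Ψ x‖ ^ 2) + b * (Q₂ x * ‖Ψ x‖ ^ 2)
          + lam * pairPotential w x * ‖Ψ x‖ ^ 2) := by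
        refine integral_mono (integrableOn_cube (by fun_prop)) (integrableOn_cube (by fun_prop))
          fun x ↦ ?_
        linarith [mul_le_mul_of_nonneg_right (hC x) (sq_nonneg ‖Ψ x‖)]
    _ = a * (∫ x in cube d N, Q₁ x * ‖Ψ x‖ ^ 2) + b * (∫ x in cube d N, Q₂ x * ‖Ψ x‖ ^ 2)
          + ∫ x in cube d N, lam * pairPotential w x * ‖Ψ x‖ ^ 2 := by
        rw [integral_add (integrableOn_cube (by fun_prop)) (integrableOn_cube (by fun_prop)),
          integral_add (integrableOn_cube (by fun_prop)) (integrableOn_cube (by fun_prop)),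
          integral_const_mul, integral_const_mul]
    _ ≤ a * kineticEnergy Ψ + b * kineticEnergy Ψ
          + ∫ x in cube d N, lam * pairPotential w x * ‖Ψ x‖ ^ 2 := by gcongr
    _ = energy d N lam w Ψ := by rw [hΨ.energy_eq lam hw, ← add_mul, hab, one_mul]

end Admissible

/-! ### The lower bound -/

section ModeClosure

variable {d : ℕ} {S : Finset (Fin d → ℤ)} {p q : Fin d → ℤ}

/-- The nonzero modes that are modes of `S` or transfers between two of them. -/
def modeClosure (S : Finset (Fin d → ℤ)) : Finset (Fin d → ℤ) := (S ∪ (S - S)).erase 0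

theorem zero_notMem_modeClosure : 0 ∉ modeClosure S := notMem_erase 0 _

theorem subset_modeClosure (hS : 0 ∉ S) : S ⊆ modeClosure S :=
  subset_erase.2 ⟨subset_union_left, hS⟩

theorem sub_mem_modeClosure (hp : p ∈ S) (hq : q ∈ S) (hpq : p ≠ q) : p - q ∈ modeClosure S :=
  mem_erase.2 ⟨sub_ne_zero.2 hpq, mem_union_right _ (sub_mem_sub hp hq)⟩

end ModeClosure

section KineticDensity

variable {d N : ℕ} {Ψ : Config d N → ℂ}

theorem mul_fluctuation_sub_le [NeZero N] {T : Finset (Fin d → ℤ)} (hT : 0 ∉ T) {δ : ℝ}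
    (hδ : 0 ≤ δ) (hδT : δ * #T ≤ 1 / 2) (x : Config d N) :
    δ * (fluctuation T 1 x - ∑ p ∈ T, pSq d p)
      ≤ ∑ j, ∑ i, (-δ * jastrowHess T 1 j i x - (-δ * jastrowGrad T 1 j i x) ^ 2) := by
  have hfield : ∑ j, ∑ i, (-δ * jastrowHess T 1 j i x - (-δ * jastrowGrad T 1 j i x) ^ 2)
      = -δ * ∑ j, ∑ i, jastrowHess T 1 j i x - δ ^ 2 * ∑ j, ∑ i, jastrowGrad T 1 j i x ^ 2 := by
    simp only [sum_sub_distrib, mul_sum, mul_pow, neg_sq]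
  have hgap : fluctuation T 1 x ≤ fluctuation T (pSq d) x / 2 := by
    have h := fluctuation_le_fluctuation (N := N)
      (fun p hp ↦ two_le_pSq (ne_of_mem_of_not_mem hp hT)) x
    simp only [fluctuation, Pi.one_apply, one_mul, ← mul_sum] at h ⊢
    linarith
  have hpos : 0 ≤ fluctuation T (pSq d) x := fluctuation_nonneg (fun p _ ↦ pSq_nonneg p) x
  have hgrad : δ ^ 2 * ∑ j, ∑ i, jastrowGrad T 1 j i x ^ 2
      ≤ δ * (1 / 2 * fluctuation T (pSq d) x) := by
    have h := sum_jastrowGrad_sq_le T 1 x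
    simp only [Pi.one_apply, one_pow, one_mul] at h
    calc _ ≤ δ ^ 2 * (#T * fluctuation T (pSq d) x) := by gcongr
      _ = δ * (δ * #T * fluctuation T (pSq d) x) := by ring
      _ ≤ _ := by gcongr
  have hhess := sum_jastrowHess T 1 x
  simp only [Pi.one_apply, one_mul] at hhess
  rw [hfield, hhess]
  linarith [mul_le_mul_of_nonneg_left hgap hδ]

-- The field `A = -δ∇F` with `c = 1` and small `δ` makes the kinetic energy control all `|ρ_p|²`.
theorem IsAdmissible.integral_fluctuation_sub_le_kineticEnergy [NeZero N]
    (hΨ : IsAdmissible d N Ψ) {T : Finset (Fin d → ℤ)} (hT : 0 ∉ T) {δ : ℝ} (hδ : 0 ≤ δ)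
    (hδT : δ * #T ≤ 1 / 2) :
    ∫ x in cube d N, δ * (fluctuation T 1 x - ∑ p ∈ T, pSq d p) * ‖Ψ x‖ ^ 2
      ≤ kineticEnergy Ψ := by
  have hΨ2 : Continuous fun x ↦ ‖Ψ x‖ ^ 2 := hΨ.1.continuous.norm.pow 2
  have hgrad (j i) : Continuous (jastrowGrad (N := N) T 1 j i) :=
    (hasPeriodicDeriv_jastrow T 1 j i).continuous_deriv
  have hhess (j i) : Continuous (jastrowHess (N := N) T 1 j i) :=
    (hasPeriodicDeriv_jastrowGrad T 1 j i).continuous_deriv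
  have hfl : Continuous fun x : Config d N ↦
      δ * (fluctuation T 1 x - ∑ p ∈ T, pSq d p) * ‖Ψ x‖ ^ 2 :=
    (continuous_const.mul (continuous_fluctuation.sub continuous_const)).mul hΨ2
  calc _ ≤ ∫ x in cube d N, (∑ j, ∑ i,
        (-δ * jastrowHess T 1 j i x - (-δ * jastrowGrad T 1 j i x) ^ 2)) * ‖Ψ x‖ ^ 2 :=
        integral_mono (integrableOn_cube hfl) (integrableOn_cube (by fun_prop))
          fun x ↦ mul_le_mul_of_nonneg_right (mul_fluctuation_sub_le hT hδ hδT x) (sq_nonneg _)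
    _ ≤ _ := integral_divergence_sub_sq_mul_norm_sq_le hΨ.hasPeriodicDeriv fun j i ↦
        (hasPeriodicDeriv_jastrowGrad T 1 j i).const_smul (-δ)

end KineticDensity

section Cutoff

variable {d N : ℕ} {S : Finset (Fin d → ℤ)} {c : (Fin d → ℤ) → ℝ} {κ : ℝ}

theorem jastrow_nonneg (hc : ∀ p ∈ S, 0 ≤ c p) (x : Config d N) : 0 ≤ jastrow S c x :=
  div_nonneg (fluctuation_nonneg hc x) zero_le_two

/-- The cutoff `χ = (1 + κF)⁻¹` of the Jastrow field `∇F`, which makes the cubic terms small even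
where the density modes are large. -/
def jastrowCutoff (S : Finset (Fin d → ℤ)) (c : (Fin d → ℤ) → ℝ) (κ : ℝ) (x : Config d N) : ℝ :=
  (1 + κ * jastrow S c x)⁻¹

theorem one_le_one_add_mul_jastrow (hc : ∀ p ∈ S, 0 ≤ c p) (hκ : 0 ≤ κ) (x : Config d N) :
    1 ≤ 1 + κ * jastrow S c x :=
  le_add_of_nonneg_right (mul_nonneg hκ (jastrow_nonneg hc x))

theorem jastrowCutoff_mul_one_add (hc : ∀ p ∈ S, 0 ≤ c p) (hκ : 0 ≤ κ) (x : Config d N) :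
    jastrowCutoff S c κ x * (1 + κ * jastrow S c x) = 1 :=
  inv_mul_cancel₀ (zero_lt_one.trans_le (one_le_one_add_mul_jastrow hc hκ x)).ne'

theorem jastrowCutoff_pos (hc : ∀ p ∈ S, 0 ≤ c p) (hκ : 0 ≤ κ) (x : Config d N) :
    0 < jastrowCutoff S c κ x :=
  inv_pos.2 (zero_lt_one.trans_le (one_le_one_add_mul_jastrow hc hκ x))

theorem jastrowCutoff_le_one (hc : ∀ p ∈ S, 0 ≤ c p) (hκ : 0 ≤ κ) (x : Config d N) :
    jastrowCutoff S c κ x ≤ 1 :=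
  inv_le_one_of_one_le₀ (one_le_one_add_mul_jastrow hc hκ x)

theorem one_sub_le_jastrowCutoff (hc : ∀ p ∈ S, 0 ≤ c p) (hκ : 0 ≤ κ) (x : Config d N) :
    1 - κ * jastrow S c x ≤ jastrowCutoff S c κ x := by
  have h := one_le_one_add_mul_jastrow hc hκ x
  nlinarith [jastrowCutoff_mul_one_add hc hκ x, jastrowCutoff_le_one hc hκ x]

theorem hasPeriodicDeriv_jastrowCutoff (hc : ∀ p ∈ S, 0 ≤ c p) (hκ : 0 ≤ κ) (j : Fin N)
    (i : Fin d) :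
    HasPeriodicDeriv j i (jastrowCutoff S c κ)
      fun x ↦ -κ * jastrowCutoff S c κ x ^ 2 * jastrowGrad S c j i x := by
  have hne (x : Config d N) : 1 + κ * jastrow S c x ≠ 0 :=
    (zero_lt_one.trans_le (one_le_one_add_mul_jastrow hc hκ x)).ne'
  have hjastrow := (contDiff_jastrow (N := N) S c (n := 0)).continuous
  refine (hasPeriodicDeriv_jastrow S c j i).comp (φ := fun t ↦ (1 + κ * t)⁻¹) (fun x ↦ ?_) ?_
  · refine ((((hasDerivAt_id (jastrow S c x)).const_mul κ).const_add 1).fun_inv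
      (hne x)).congr_deriv ?_
    simp only [jastrowCutoff, id, mul_one, div_eq_mul_inv, inv_pow]
  · exact continuous_const.mul
      (((continuous_const.add (continuous_const.mul hjastrow)).inv₀ hne).pow 2)

/-- The divergence of the field `A = χ∇F` minus its square: the potential gained from the kinetic
energy by completing the square. -/
def cutoffPotential (S : Finset (Fin d → ℤ)) (c : (Fin d → ℤ) → ℝ) (κ : ℝ) (x : Config d N) : ℝ :=
  jastrowCutoff S c κ x * ∑ j, ∑ i, jastrowHess S c j i x
    - (1 + κ) * (jastrowCutoff S c κ x ^ 2 * ∑ j, ∑ i, jastrowGrad S c j i x ^ 2)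

theorem hasPeriodicDeriv_jastrowCutoff_mul_jastrowGrad (hc : ∀ p ∈ S, 0 ≤ c p) (hκ : 0 ≤ κ)
    (j : Fin N) (i : Fin d) :
    HasPeriodicDeriv j i (fun x ↦ jastrowCutoff S c κ x * jastrowGrad S c j i x)
      fun x ↦ jastrowCutoff S c κ x * jastrowHess S c j i x
        - κ * (jastrowCutoff S c κ x ^ 2 * jastrowGrad S c j i x ^ 2) :=
  ((hasPeriodicDeriv_jastrowCutoff hc hκ j i).mul
    (hasPeriodicDeriv_jastrowGrad S c j i)).congr_deriv fun x ↦ by ring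

theorem cutoffPotential_eq (x : Config d N) :
    cutoffPotential S c κ x = ∑ j, ∑ i, (jastrowCutoff S c κ x * jastrowHess S c j i x
      - κ * (jastrowCutoff S c κ x ^ 2 * jastrowGrad S c j i x ^ 2)
      - (jastrowCutoff S c κ x * jastrowGrad S c j i x) ^ 2) := by
  simp only [cutoffPotential, sum_sub_distrib, mul_pow, ← mul_sum]
  ring

theorem IsAdmissible.integral_cutoffPotential_le_kineticEnergy {Ψ : Config d N → ℂ}
    (hΨ : IsAdmissible d N Ψ) (hc : ∀ p ∈ S, 0 ≤ c p) (hκ : 0 ≤ κ) :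
    ∫ x in cube d N, cutoffPotential S c κ x * ‖Ψ x‖ ^ 2 ≤ kineticEnergy Ψ := by
  simp only [cutoffPotential_eq]
  exact integral_divergence_sub_sq_mul_norm_sq_le hΨ.hasPeriodicDeriv
    (hasPeriodicDeriv_jastrowCutoff_mul_jastrowGrad hc hκ)

theorem continuous_cutoffPotential (hc : ∀ p ∈ S, 0 ≤ c p) (hκ : 0 ≤ κ) :
    Continuous (cutoffPotential S c κ : Config d N → ℝ) := by
  have hA := hasPeriodicDeriv_jastrowCutoff_mul_jastrowGrad (N := N) hc hκ
  simp only [funext cutoffPotential_eq]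
  exact continuous_finsetSum _ fun j _ ↦ continuous_finsetSum _ fun i _ ↦
    (hA j i).continuous_deriv.sub ((hA j i).continuous.pow 2)

end Cutoff

section CutoffBounds

variable {d N : ℕ} {S : Finset (Fin d → ℤ)} {c : (Fin d → ℤ) → ℝ} {κ η : ℝ}

theorem jastrow_le (hS : 0 ∉ S) (hc : ∀ p ∈ S, 0 ≤ c p) (x : Config d N) :
    jastrow S c x ≤ (∑ p ∈ S, c p) / 2 * fluctuation (modeClosure S) 1 x := by
  have h := fluctuation_le_sum_mul hc (subset_modeClosure hS) x
  rw [jastrow]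
  linarith

theorem mul_norm_densityMode_div_le (hc : ∀ p ∈ S, 0 ≤ c p) (hη : 0 ≤ η) (hκ : 0 ≤ κ)
    (hcη : ∀ p ∈ S, c p ≤ 2 * η ^ 2 * (κ * N)) {p : Fin d → ℤ} (hp : p ∈ S) (x : Config d N) :
    c p * ‖densityMode p x‖ / N ≤ η * (1 + κ * jastrow S c x) := by
  have hF := jastrow_nonneg hc x
  have hmode : c p * (‖densityMode p x‖ ^ 2 / N) ≤ 2 * jastrow S c x := by
    rw [jastrow, mul_div_cancel₀ _ two_ne_zero]
    exact mul_norm_densityMode_sq_div_le_fluctuation hc hp x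
  obtain rfl | hN := eq_or_ne N 0
  · simp only [CharP.cast_eq_zero, div_zero]
    positivity
  refine le_of_sq_le_sq ?_ (by positivity)
  calc (c p * ‖densityMode p x‖ / N) ^ 2 = c p * (c p * (‖densityMode p x‖ ^ 2 / N)) / N := by ring
    _ ≤ 2 * η ^ 2 * (κ * N) * (2 * jastrow S c x) / N := by
        have := hc p hp
        gcongr
        exact hcη p hp
    _ = 4 * (κ * jastrow S c x) * η ^ 2 := by field_simp; ring
    _ ≤ (η * (1 + κ * jastrow S c x)) ^ 2 := by
        nlinarith [mul_nonneg (sq_nonneg η) (sq_nonneg (1 - κ * jastrow S c x))]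

theorem jastrowCutoff_mul_le (hc : ∀ p ∈ S, 0 ≤ c p) (hη : 0 ≤ η) (hκ : 0 ≤ κ)
    (hcη : ∀ p ∈ S, c p ≤ 2 * η ^ 2 * (κ * N)) {p : Fin d → ℤ} (hp : p ∈ S) (x : Config d N) :
    jastrowCutoff S c κ x * (c p * ‖densityMode p x‖ / N) ≤ η := by
  calc _ ≤ jastrowCutoff S c κ x * (η * (1 + κ * jastrow S c x)) :=
        mul_le_mul_of_nonneg_left (mul_norm_densityMode_div_le hc hη hκ hcη hp x)
          (jastrowCutoff_pos hc hκ x).le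
    _ = η := by rw [mul_left_comm, jastrowCutoff_mul_one_add hc hκ, mul_one]

/-- The total weight of the cubic terms relative to `∑_p |ρ_p|²/N`. -/
def cubicWeight (S : Finset (Fin d → ℤ)) (c : (Fin d → ℤ) → ℝ) : ℝ :=
  ∑ p ∈ S, ∑ q ∈ S.erase p, c q * |mom p ⬝ᵥ mom q|

theorem cubicWeight_nonneg (hc : ∀ p ∈ S, 0 ≤ c p) : 0 ≤ cubicWeight S c :=
  sum_nonneg fun _ _ ↦ sum_nonneg fun q hq ↦
    mul_nonneg (hc q (mem_of_mem_erase hq)) (abs_nonneg _)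

theorem norm_densityMode_mul_div_le (hS : 0 ∉ S) {p q : Fin d → ℤ} (hp : p ∈ S) (hq : q ∈ S)
    (hpq : q ≠ p) (x : Config d N) :
    ‖densityMode q x‖ * ‖densityMode (q - p) x‖ / N ≤ fluctuation (modeClosure S) 1 x := by
  have hq' := norm_densityMode_sq_div_le_fluctuation_one (subset_modeClosure hS hq) x
  have hpq' := norm_densityMode_sq_div_le_fluctuation_one (sub_mem_modeClosure hq hp hpq) x
  calc ‖densityMode q x‖ * ‖densityMode (q - p) x‖ / N
      ≤ (‖densityMode q x‖ ^ 2 + ‖densityMode (q - p) x‖ ^ 2) / 2 / N := by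
        gcongr
        linarith [two_mul_le_add_sq ‖densityMode q x‖ ‖densityMode (q - p) x‖]
    _ = (‖densityMode q x‖ ^ 2 / N + ‖densityMode (q - p) x‖ ^ 2 / N) / 2 := by ring
    _ ≤ _ := by linarith

theorem jastrowCutoff_sq_mul_cubicRemainder_le (hS : 0 ∉ S) (hc : ∀ p ∈ S, 0 ≤ c p) (hη : 0 ≤ η)
    (hκ : 0 ≤ κ) (hcη : ∀ p ∈ S, c p ≤ 2 * η ^ 2 * (κ * N)) (x : Config d N) :
    jastrowCutoff S c κ x ^ 2 * cubicRemainder S c x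
      ≤ η * cubicWeight S c * fluctuation (modeClosure S) 1 x := by
  simp only [cubicRemainder, cubicWeight, mul_sum, sum_mul]
  refine sum_le_sum fun p hp ↦ sum_le_sum fun q hq ↦ ?_
  obtain ⟨hqp, hqS⟩ := mem_erase.1 hq
  have hcq := hc q hqS
  have hχ := (jastrowCutoff_pos hc hκ x).le
  rw [abs_mul, abs_mul, abs_of_nonneg (hc p hp), abs_of_nonneg hcq]
  calc _ = jastrowCutoff S c κ x * ((jastrowCutoff S c κ x * (c p * ‖densityMode p x‖ / N)) *
          (c q * |mom p ⬝ᵥ mom q| * (‖densityMode q x‖ * ‖densityMode (q - p) x‖ / N))) := by ring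
    _ ≤ 1 * (η * (c q * |mom p ⬝ᵥ mom q| * fluctuation (modeClosure S) 1 x)) := by
        have := hc p hp
        gcongr
        · exact jastrowCutoff_le_one hc hκ x
        · exact jastrowCutoff_mul_le hc hη hκ hcη hp x
        · exact norm_densityMode_mul_div_le hS hp hqS hqp x
    _ = _ := by ring

/-- The error of `cutoffPotential` relative to `∑_p |ρ_p|²/N`, when `η` bounds the cut-off
coefficients `χ c_p |ρ_p|/N`. -/
def cutoffError (S : Finset (Fin d → ℤ)) (c : (Fin d → ℤ) → ℝ) (η κ : ℝ) : ℝ :=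
  η * cubicWeight S c + κ * ((∑ p ∈ S, c p) / 2 * ∑ p ∈ S, c p * pSq d p
    + ∑ p ∈ S, c p ^ 2 * pSq d p + η * cubicWeight S c)

theorem le_cutoffPotential [NeZero N] (hS : 0 ∉ S) (hneg : ∀ p ∈ S, -p ∈ S)
    (hc : ∀ p ∈ S, 0 ≤ c p) (heven : ∀ p, c (-p) = c p) (hη : 0 ≤ η) (hκ : 0 ≤ κ)
    (hcη : ∀ p ∈ S, c p ≤ 2 * η ^ 2 * (κ * N)) (x : Config d N) :
    ∑ p ∈ S, c p * pSq d p - fluctuation S (fun p ↦ (c p + c p ^ 2) * pSq d p) x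
        - cutoffError S c η κ * fluctuation (modeClosure S) 1 x
      ≤ cutoffPotential S c κ x := by
  set Y := fluctuation (modeClosure S) 1 x
  set χ := jastrowCutoff S c κ x
  set L := fluctuation S (fun p ↦ c p * pSq d p) x
  set D := fluctuation S (fun p ↦ c p ^ 2 * pSq d p) x
  have hχ₀ : 0 ≤ χ := (jastrowCutoff_pos hc hκ x).le
  have hχ₁ : χ ≤ 1 := jastrowCutoff_le_one hc hκ x
  have hcp : ∀ p ∈ S, 0 ≤ c p * pSq d p := fun p hp ↦ mul_nonneg (hc p hp) (pSq_nonneg p)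
  have hc2p : ∀ p ∈ S, 0 ≤ c p ^ 2 * pSq d p := fun p _ ↦ mul_nonneg (sq_nonneg _) (pSq_nonneg p)
  have hsplit : fluctuation S (fun p ↦ (c p + c p ^ 2) * pSq d p) x = L + D := by
    simp only [L, D, fluctuation, ← sum_add_distrib, add_mul]
  have hdiag : χ * (∑ p ∈ S, c p * pSq d p - L)
      ≥ (1 - κ * ((∑ p ∈ S, c p) / 2 * Y)) * ∑ p ∈ S, c p * pSq d p - L := by
    have hχ_ge : 1 - κ * ((∑ p ∈ S, c p) / 2 * Y) ≤ χ := by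
      linarith [one_sub_le_jastrowCutoff hc hκ x, mul_le_mul_of_nonneg_left (jastrow_le hS hc x) hκ]
    linarith [mul_le_mul_of_nonneg_right hχ_ge (sum_nonneg hcp),
      mul_le_of_le_one_left (fluctuation_nonneg hcp x) hχ₁]
  have hgrad : χ ^ 2 * ∑ j, ∑ i, jastrowGrad S c j i x ^ 2 ≤ D + η * cubicWeight S c * Y := by
    calc _ ≤ χ ^ 2 * (D + cubicRemainder S c x) := by
          gcongr
          linarith [(abs_le.1 (abs_sum_jastrowGrad_sq_sub_le hneg heven x)).2]
      _ ≤ _ := by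
          rw [mul_add]
          exact add_le_add (mul_le_of_le_one_left (fluctuation_nonneg hc2p x)
            (pow_le_one₀ hχ₀ hχ₁)) (jastrowCutoff_sq_mul_cubicRemainder_le hS hc hη hκ hcη x)
  have hD : D ≤ (∑ p ∈ S, c p ^ 2 * pSq d p) * Y :=
    fluctuation_le_sum_mul hc2p (subset_modeClosure hS) x
  rw [cutoffPotential, sum_jastrowHess, hsplit, cutoffError]
  linarith [mul_le_mul_of_nonneg_left hgrad hκ, mul_le_mul_of_nonneg_left hD hκ]

theorem exists_cutoffError_le (hc : ∀ p ∈ S, 0 ≤ c p) {r : ℝ} (hr : 0 < r) :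
    ∃ η L : ℝ, 0 ≤ η ∧ 0 ≤ L ∧ (∀ p ∈ S, c p ≤ 2 * η ^ 2 * L) ∧
      ∀ᶠ N : ℕ in atTop, cutoffError S c η (L / N) ≤ r := by
  have hM := cubicWeight_nonneg hc
  let η := r / (2 * (cubicWeight S c + 1))
  have hη : 0 < η := by positivity
  have hηM : η * cubicWeight S c < r := by
    rw [div_mul_eq_mul_div, div_lt_iff₀ (by positivity)]
    nlinarith
  refine ⟨η, (∑ p ∈ S, c p) / (2 * η ^ 2), hη.le,
    div_nonneg (sum_nonneg hc) (by positivity), fun p hp ↦ ?_, ?_⟩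
  · rw [mul_div_cancel₀ _ (by positivity)]
    exact single_le_sum hc hp
  · have hlim : Tendsto (fun N : ℕ ↦ cutoffError S c η ((∑ p ∈ S, c p) / (2 * η ^ 2) / N)) atTop
        (𝓝 (η * cubicWeight S c)) := by
      have h := ((tendsto_const_div_atTop_nhds_zero_nat ((∑ p ∈ S, c p) / (2 * η ^ 2))).mul_const
        ((∑ p ∈ S, c p) / 2 * ∑ p ∈ S, c p * pSq d p + ∑ p ∈ S, c p ^ 2 * pSq d p
          + η * cubicWeight S c)).const_add (η * cubicWeight S c)
      rwa [zero_mul, add_zero] at h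
    exact (hlim.eventually_lt_const hηM).mono fun _ ↦ le_of_lt

end CutoffBounds

section LowerBound

variable {d N : ℕ} [NeZero N] {Ψ : Config d N → ℂ} {hw c : (Fin d → ℤ) → ℝ}
  {S : Finset (Fin d → ℤ)}

theorem IsAdmissible.le_energy (hΨ : IsAdmissible d N Ψ) (h0 : ∀ k, 0 ≤ hw k) (hs : Summable hw)
    (hS : 0 ∉ S) (hneg : ∀ p ∈ S, -p ∈ S) (hc : ∀ p ∈ S, 0 ≤ c p) (heven : ∀ p, c (-p) = c p)
    (hcw : ∀ p ∈ S, (c p + c p ^ 2) * pSq d p = hw p / 2) {η κ δ ε lam : ℝ} (hη : 0 ≤ η)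
    (hκ : 0 ≤ κ) (hcη : ∀ p ∈ S, c p ≤ 2 * η ^ 2 * (κ * N)) (hδ : 0 ≤ δ)
    (hδS : δ * #(modeClosure S) ≤ 1 / 2) (hε₀ : 0 ≤ ε) (hε₁ : ε ≤ 1) (hlam : 0 ≤ lam)
    (hlamN : 1 - ε ≤ N * lam) (herr : cutoffError S c η κ ≤ ε * δ) :
    (1 - ε) * ∑ p ∈ S, c p * pSq d p - N * lam / 2 * (∑' k, hw k - hw 0)
        - ε * δ * ∑ p ∈ modeClosure S, pSq d p + lam / 2 * N * (N - 1) * hw 0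
      ≤ energy d N lam (wOf d hw) Ψ := by
  refine hΨ.le_energy_of_le (Q₂ := fun x ↦
      δ * (fluctuation (modeClosure S) 1 x - ∑ p ∈ modeClosure S, pSq d p))
    (continuous_wOf hs) (continuous_cutoffPotential hc hκ)
    (continuous_const.mul (continuous_fluctuation.sub continuous_const))
    (hΨ.integral_cutoffPotential_le_kineticEnergy hc hκ)
    (hΨ.integral_fluctuation_sub_le_kineticEnergy zero_notMem_modeClosure hδ hδS)
    (sub_nonneg.2 hε₁) hε₀ (sub_add_cancel 1 ε) fun x ↦ ?_
  set Y := fluctuation (modeClosure S) 1 x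
  have hcutoff := le_cutoffPotential hS hneg hc heven hη hκ hcη x
  have hpot : fluctuation S (fun p ↦ (c p + c p ^ 2) * pSq d p) x = fluctuation S hw x / 2 := by
    rw [fluctuation, fluctuation, sum_div]
    exact sum_congr rfl fun p hp ↦ by rw [hcw p hp]; ring
  rw [hpot] at hcutoff
  have hY : 0 ≤ Y := fluctuation_nonneg (fun _ _ ↦ zero_le_one) x
  have hV : lam * pairPotential (wOf d hw) x = lam / 2 * (hw 0 * N ^ 2 + N * fluctuation S hw x
      + tailPotential hw S x - N * ∑' k, hw k) := by
    linear_combination lam / 2 * two_mul_pairPotential hs hS x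
  have hfl : 0 ≤ fluctuation S hw x := fluctuation_nonneg (fun p _ ↦ h0 p) x
  have herrY : (1 - ε) * (cutoffError S c η κ * Y) ≤ ε * (δ * Y) := by
    calc _ ≤ (1 - ε) * (ε * δ * Y) := by gcongr
      _ ≤ ε * δ * Y := mul_le_of_le_one_left (by positivity) (by linarith)
      _ = _ := mul_assoc ..
  linarith [mul_le_mul_of_nonneg_left hcutoff (sub_nonneg.2 hε₁),
    mul_le_mul_of_nonneg_right hlamN hfl, mul_nonneg hlam (tailPotential_nonneg h0 S x)]

end LowerBound

/-! ### The Bogoliubov coefficients -/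

theorem exists_neg_mem_of_eventually_atTop {G : Type*} [AddCommGroup G] [DecidableEq G]
    {P : Finset G → Prop} (hP : ∀ᶠ s in atTop, P s) :
    ∃ S : Finset G, (∀ p ∈ S, -p ∈ S) ∧ 0 ∉ S ∧ P (insert 0 S) := by
  obtain ⟨s, hs⟩ := eventually_atTop.1 hP
  refine ⟨(s ∪ -s).erase 0, fun p hp ↦ ?_, notMem_erase 0 _, hs _ ?_⟩
  · simpa only [mem_erase, mem_union, mem_neg', ne_eq, neg_eq_zero, neg_neg, or_comm] using hp
  · exact subset_union_left.trans (insert_erase_subset 0 _)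

/-- The coefficient `c_p = (e_p - |p|²) / (2|p|²)` of the mode `p` in the Jastrow exponent. Division
by zero makes it vanish at `p = 0`. -/
def bogoliubovCoeff (d : ℕ) (hw : (Fin d → ℤ) → ℝ) (k : Fin d → ℤ) : ℝ :=
  (ePk d hw k - pSq d k) / (2 * pSq d k)

section Bogoliubov

variable {d : ℕ} {hw : (Fin d → ℤ) → ℝ}

theorem pSq_zero : pSq d 0 = 0 := by simp [pSq]

theorem pSq_le_ePk (h0 : ∀ k, 0 ≤ hw k) (k : Fin d → ℤ) : pSq d k ≤ ePk d hw k :=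
  Real.le_sqrt_of_sq_le <| le_add_of_nonneg_right <|
    mul_nonneg (mul_nonneg zero_le_two (pSq_nonneg k)) (h0 k)

theorem ePk_le_pSq_add (h0 : ∀ k, 0 ≤ hw k) (k : Fin d → ℤ) : ePk d hw k ≤ pSq d k + hw k :=
  Real.sqrt_le_iff.2 ⟨add_nonneg (pSq_nonneg k) (h0 k), by linarith [sq_nonneg (hw k)]⟩

theorem ePk_sq (h0 : ∀ k, 0 ≤ hw k) (k : Fin d → ℤ) :
    ePk d hw k ^ 2 = pSq d k ^ 2 + 2 * pSq d k * hw k :=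
  Real.sq_sqrt <| add_nonneg (sq_nonneg _) <|
    mul_nonneg (mul_nonneg zero_le_two (pSq_nonneg k)) (h0 k)

theorem bogoliubovCoeff_zero : bogoliubovCoeff d hw 0 = 0 := by simp [bogoliubovCoeff, pSq_zero]

theorem bogoliubovCoeff_neg (heven : ∀ k, hw (-k) = hw k) (k : Fin d → ℤ) :
    bogoliubovCoeff d hw (-k) = bogoliubovCoeff d hw k := by
  simp only [bogoliubovCoeff, ePk, pSq_neg, heven]

theorem bogoliubovCoeff_nonneg (h0 : ∀ k, 0 ≤ hw k) (k : Fin d → ℤ) :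
    0 ≤ bogoliubovCoeff d hw k :=
  div_nonneg (sub_nonneg.2 (pSq_le_ePk h0 k)) (mul_nonneg zero_le_two (pSq_nonneg k))

theorem bogoliubovCoeff_mul_pSq (k : Fin d → ℤ) :
    bogoliubovCoeff d hw k * pSq d k = (ePk d hw k - pSq d k) / 2 := by
  rcases eq_or_ne k 0 with rfl | hk
  · simp [pSq_zero, ePk]
  · have := two_le_pSq hk
    rw [bogoliubovCoeff]
    field_simp

theorem bogoliubovCoeff_add_sq_mul_pSq (h0 : ∀ k, 0 ≤ hw k) {k : Fin d → ℤ} (hk : k ≠ 0) :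
    (bogoliubovCoeff d hw k + bogoliubovCoeff d hw k ^ 2) * pSq d k = hw k / 2 := by
  have hp : pSq d k ≠ 0 := by linarith [two_le_pSq hk]
  rw [bogoliubovCoeff]
  field_simp
  linear_combination ePk_sq h0 k

theorem bogoliubovCoeff_le (h0 : ∀ k, 0 ≤ hw k) (k : Fin d → ℤ) :
    bogoliubovCoeff d hw k ≤ hw k := by
  rcases eq_or_ne k 0 with rfl | hk
  · exact bogoliubovCoeff_zero.trans_le (h0 0)
  · have hp := two_le_pSq hk
    rw [bogoliubovCoeff, div_le_iff₀ (by linarith)]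
    nlinarith [ePk_le_pSq_add h0 k, h0 k]

theorem summable_bogoliubovCoeff (h0 : ∀ k, 0 ≤ hw k) (hs : Summable hw) :
    Summable (bogoliubovCoeff d hw) :=
  .of_nonneg_of_le (bogoliubovCoeff_nonneg h0) (bogoliubovCoeff_le h0) hs

theorem summable_bogoliubovCoeff_mul_pSq (h0 : ∀ k, 0 ≤ hw k) (hs : Summable hw) :
    Summable fun k ↦ bogoliubovCoeff d hw k * pSq d k := by
  refine .of_nonneg_of_le (fun k ↦ mul_nonneg (bogoliubovCoeff_nonneg h0 k) (pSq_nonneg k))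
    (fun k ↦ ?_) hs
  rw [bogoliubovCoeff_mul_pSq]
  linarith [ePk_le_pSq_add h0 k, h0 k]

theorem eB_eq_tsum_bogoliubovCoeff_mul_pSq (h0 : ∀ k, 0 ≤ hw k) (hs : Summable hw) :
    eB d hw = ∑' k, bogoliubovCoeff d hw k * pSq d k - (∑' k, hw k - hw 0) / 2 := by
  have hterm (k : Fin d → ℤ) : pSq d k + hw k - ePk d hw k
      = hw k - 2 * (bogoliubovCoeff d hw k * pSq d k) := by
    rw [bogoliubovCoeff_mul_pSq]; ring
  have hcs := (summable_bogoliubovCoeff_mul_pSq h0 hs).mul_left 2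
  have hsplit : hw 0 + ∑' k : {k : Fin d → ℤ // k ≠ 0}, (pSq d k.1 + hw k.1 - ePk d hw k.1)
      = ∑' k, hw k - 2 * ∑' k, bogoliubovCoeff d hw k * pSq d k := by
    simp only [hterm]
    rw [← tsum_mul_left, ← hs.tsum_sub hcs, ← (hs.sub hcs).tsum_subtype_add_tsum_subtype_compl {0},
      tsum_singleton 0 fun k ↦ hw k - 2 * (bogoliubovCoeff d hw k * pSq d k), pSq_zero, mul_zero,
      mul_zero, sub_zero]
    rfl
  rw [eB]
  linear_combination (-1 / 2) * hsplit

end Bogoliubov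

/-! ### The Jastrow trial state -/

section JastrowState

variable {d N : ℕ} {S : Finset (Fin d → ℤ)} {c : (Fin d → ℤ) → ℝ}

/-- The normalization constant `Z = ∫ e^{-2F}` of the trial state, with `F = jastrow S c`. -/
def jastrowNorm (d N : ℕ) (S : Finset (Fin d → ℤ)) (c : (Fin d → ℤ) → ℝ) : ℝ :=
  ∫ x : Config d N in cube d N, exp (-fluctuation S c x)

/-- The Jastrow trial state `e^{-F} / √Z`, with `F = jastrow S c`. -/
def jastrowState (d N : ℕ) (S : Finset (Fin d → ℤ)) (c : (Fin d → ℤ) → ℝ) (x : Config d N) : ℂ :=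
  ((exp (-jastrow S c x) / √(jastrowNorm d N S c) : ℝ) : ℂ)

-- Jensen's inequality, in the form `e^{-s} ≥ e^{-B} (1 + B - s)`.
theorem exp_neg_sum_le_jastrowNorm [NeZero N] (hS : 0 ∉ S) :
    exp (-∑ p ∈ S, c p) ≤ jastrowNorm d N S c := by
  set B := ∑ p ∈ S, c p with hB
  have hfl : Continuous (fluctuation S c : Config d N → ℝ) := continuous_fluctuation
  have htangent (s : ℝ) : exp (-B) * (1 + B - s) ≤ exp (-s) := by
    calc exp (-B) * (1 + B - s) ≤ exp (-B) * exp (B - s) := by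
          gcongr
          linarith [add_one_le_exp (B - s)]
      _ = exp (-s) := by rw [← exp_add]; congr 1; ring
  calc exp (-B) = ∫ x : Config d N in cube d N, exp (-B) * (1 + B - fluctuation S c x) := by
        rw [integral_const_mul, integral_sub (integrableOn_cube continuous_const)
          (integrableOn_cube hfl), integral_fluctuation hS, ← hB]
        simp [volume_restrict_cube]
    _ ≤ jastrowNorm d N S c :=
        integral_mono (integrableOn_cube (by fun_prop)) (integrableOn_cube (by fun_prop))
          fun x ↦ htangent _

theorem jastrowNorm_pos [NeZero N] (hS : 0 ∉ S) : 0 < jastrowNorm d N S c :=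
  (exp_pos _).trans_le (exp_neg_sum_le_jastrowNorm hS)

theorem norm_jastrowState_sq [NeZero N] (hS : 0 ∉ S) (x : Config d N) :
    ‖jastrowState d N S c x‖ ^ 2 = exp (-fluctuation S c x) / jastrowNorm d N S c := by
  rw [jastrowState, Complex.norm_real, norm_eq_abs, sq_abs, div_pow,
    sq_sqrt (jastrowNorm_pos hS).le, ← exp_nat_mul, jastrow]
  congr 2
  push_cast
  ring

theorem isAdmissible_jastrowState [NeZero N] (hS : 0 ∉ S) :
    IsAdmissible d N (jastrowState d N S c) := by
  refine ⟨?_, fun x j v ↦ ?_, fun σ x ↦ ?_, ?_⟩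
  · exact Complex.ofRealCLM.contDiff.comp ((contDiff_jastrow S c).neg.exp.div_const _)
  · simp only [jastrowState, jastrow_update_add_intCast]
  · simp only [jastrowState, jastrow_comp_perm]
  · simp only [norm_jastrowState_sq hS, integral_div]
    exact div_self (jastrowNorm_pos hS).ne'

theorem hasPeriodicDeriv_jastrowState (j : Fin N) (i : Fin d) :
    HasPeriodicDeriv j i (jastrowState d N S c)
      fun x ↦ -jastrowGrad S c j i x • jastrowState d N S c x := by
  have hcont := (contDiff_jastrow S c (d := d) (N := N) (n := 0)).continuous
  refine (((hasPeriodicDeriv_jastrow S c j i).comp (φ := fun t ↦ exp (-t) / √(jastrowNorm d N S c))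
    (φ' := fun x ↦ -(exp (-jastrow S c x) / √(jastrowNorm d N S c))) (fun x ↦ ?_)
    (by fun_prop)).clm_comp Complex.ofRealCLM).congr_deriv fun x ↦ ?_
  · simpa [neg_div] using ((hasDerivAt_neg (jastrow S c x)).exp.div_const √(jastrowNorm d N S c))
  · simp [jastrowState, mul_comm]

theorem kineticEnergy_jastrowState [NeZero N] (hS : 0 ∉ S) :
    kineticEnergy (jastrowState d N S c)
      = ∫ x in cube d N, (∑ j, ∑ i, jastrowHess S c j i x - ∑ j, ∑ i, jastrowGrad S c j i x ^ 2)
          * ‖jastrowState d N S c x‖ ^ 2 := by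
  have hderiv (j : Fin N) (i : Fin d) (x : Config d N) :
      fderiv ℝ (jastrowState d N S c) x (Pi.single j (Pi.single i 1))
        = -jastrowGrad S c j i x • jastrowState d N S c x :=
    (((isAdmissible_jastrowState hS).hasPeriodicDeriv j i).hasLineDerivAt x).unique
      ((hasPeriodicDeriv_jastrowState j i).hasLineDerivAt x)
  rw [kineticEnergy, integral_sum_norm_sq_eq (isAdmissible_jastrowState hS).hasPeriodicDeriv
    (hasPeriodicDeriv_jastrowGrad S c)]
  simp only [hderiv, neg_smul, neg_add_cancel, norm_zero, ne_eq, OfNat.ofNat_ne_zero,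
    not_false_eq_true, zero_pow, add_zero, ← sum_mul, sum_sub_distrib]

theorem integral_mul_norm_jastrowState_sq_le [NeZero N] (hS : 0 ∉ S) {f g : Config d N → ℝ}
    (hf : Continuous f) (hg : Continuous g) (hg0 : ∀ x, 0 ≤ g x)
    (hfg : ∀ x, f x * exp (-fluctuation S c x) ≤ g x) :
    ∫ x in cube d N, f x * ‖jastrowState d N S c x‖ ^ 2
      ≤ exp (∑ p ∈ S, c p) * ∫ x in cube d N, g x := by
  have hfl : Continuous (fluctuation S c : Config d N → ℝ) := continuous_fluctuation
  simp only [norm_jastrowState_sq hS, ← mul_div_assoc, integral_div]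
  calc (∫ x in cube d N, f x * exp (-fluctuation S c x)) / jastrowNorm d N S c
      ≤ (∫ x in cube d N, g x) / exp (-∑ p ∈ S, c p) := by
        have hg_int : 0 ≤ ∫ x in cube d N, g x := integral_nonneg hg0
        exact div_le_div₀ hg_int
          (integral_mono (integrableOn_cube (by fun_prop)) (integrableOn_cube hg) hfg)
          (exp_pos _) (exp_neg_sum_le_jastrowNorm hS)
    _ = _ := by rw [exp_neg, div_inv_eq_mul, mul_comm]

theorem mul_norm_densityMode_mul_exp_neg_fluctuation_le [NeZero N] (hc : ∀ p ∈ S, 0 ≤ c p)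
    {p q : Fin d → ℤ} (hp : p ∈ S) (hq : q ∈ S) (x : Config d N) :
    c p * c q * (‖densityMode p x‖ * ‖densityMode q x‖) * exp (-fluctuation S c x)
      ≤ N * ∑ k ∈ S, c k := by
  set B := ∑ k ∈ S, c k
  have hB : 0 ≤ B := sum_nonneg hc
  set s := fluctuation S c x
  have hN : (0 : ℝ) < N := Nat.cast_pos.2 (NeZero.pos N)
  have hsq {k : Fin d → ℤ} (hk : k ∈ S) : (c k * ‖densityMode k x‖) ^ 2 ≤ B * (N * s) := by
    have h₁ : c k ≤ B := single_le_sum hc hk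
    have h₂ : c k * ‖densityMode k x‖ ^ 2 ≤ N * s := by
      rw [← div_le_iff₀' hN, mul_div_assoc]
      exact mul_norm_densityMode_sq_div_le_fluctuation hc hk x
    calc (c k * ‖densityMode k x‖) ^ 2 = c k * (c k * ‖densityMode k x‖ ^ 2) := by ring
      _ ≤ B * (N * s) := mul_le_mul h₁ h₂ (mul_nonneg (hc k hk) (sq_nonneg _)) ((hc k hk).trans h₁)
  have hs : s * exp (-s) ≤ 1 := by
    rw [exp_neg, ← div_eq_mul_inv, div_le_one (exp_pos s)]
    linarith [add_one_le_exp s]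
  calc c p * c q * (‖densityMode p x‖ * ‖densityMode q x‖) * exp (-s)
      ≤ B * (N * s) * exp (-s) := by
        refine mul_le_mul_of_nonneg_right ?_ (exp_pos _).le
        linarith [two_mul_le_add_sq (c p * ‖densityMode p x‖) (c q * ‖densityMode q x‖), hsq hp,
          hsq hq]
    _ = N * B * (s * exp (-s)) := by ring
    _ ≤ N * B := mul_le_of_le_one_right (mul_nonneg hN.le hB) hs

theorem cubicRemainder_mul_exp_neg_fluctuation_le [NeZero N] (hc : ∀ p ∈ S, 0 ≤ c p)
    (x : Config d N) :
    cubicRemainder S c x * exp (-fluctuation S c x)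
      ≤ (∑ p ∈ S, c p) / N *
        ∑ p ∈ S, ∑ q ∈ S.erase p, |mom p ⬝ᵥ mom q| * ‖densityMode (q - p) x‖ := by
  have hN : (N : ℝ) ≠ 0 := NeZero.ne _
  set B := ∑ p ∈ S, c p
  calc cubicRemainder S c x * exp (-fluctuation S c x)
      = ((N : ℝ) ^ 2)⁻¹ * ∑ p ∈ S, ∑ q ∈ S.erase p, |c p * c q * (mom p ⬝ᵥ mom q)| *
          (‖densityMode p x‖ * ‖densityMode q x‖ * ‖densityMode (q - p) x‖)
          * exp (-fluctuation S c x) := by simp only [cubicRemainder, mul_assoc, sum_mul]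
    _ ≤ ((N : ℝ) ^ 2)⁻¹ * ∑ p ∈ S, ∑ q ∈ S.erase p,
          N * B * (|mom p ⬝ᵥ mom q| * ‖densityMode (q - p) x‖) := by
        refine mul_le_mul_of_nonneg_left (sum_le_sum fun p hp ↦ sum_le_sum fun q hq ↦ ?_)
          (by positivity)
        have hq := mem_of_mem_erase hq
        calc _ = c p * c q * (‖densityMode p x‖ * ‖densityMode q x‖) * exp (-fluctuation S c x)
              * (|mom p ⬝ᵥ mom q| * ‖densityMode (q - p) x‖) := by
              rw [abs_mul, abs_of_nonneg (mul_nonneg (hc p hp) (hc q hq))]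
              ring
          _ ≤ _ := mul_le_mul_of_nonneg_right
              (mul_norm_densityMode_mul_exp_neg_fluctuation_le hc hp hq x) (by positivity)
    _ = _ := by
        simp only [← mul_sum]
        field_simp

theorem integral_sum_abs_mul_norm_densityMode_le :
    ∫ x : Config d N in cube d N,
        ∑ p ∈ S, ∑ q ∈ S.erase p, |mom p ⬝ᵥ mom q| * ‖densityMode (q - p) x‖
      ≤ cubicWeight S 1 * √N := by
  have hcont (p q : Fin d → ℤ) : Continuous fun x : Config d N ↦
      |mom p ⬝ᵥ mom q| * ‖densityMode (q - p) x‖ :=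
    continuous_const.mul (continuous_densityMode _).norm
  rw [integral_finsetSum _ fun p _ ↦
    integrableOn_cube (continuous_finsetSum _ fun q _ ↦ hcont p q), cubicWeight, sum_mul]
  refine sum_le_sum fun p _ ↦ ?_
  rw [integral_finsetSum _ fun q _ ↦ integrableOn_cube (hcont p q), sum_mul]
  refine sum_le_sum fun q hq ↦ ?_
  rw [integral_const_mul, Pi.one_apply, one_mul]
  gcongr
  exact integral_norm_densityMode_le (sub_ne_zero.2 (ne_of_mem_erase hq))

end JastrowState

section UpperBound

variable {d N : ℕ} {hw c : (Fin d → ℤ) → ℝ} {S : Finset (Fin d → ℤ)} {lam : ℝ}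

/-- The energy density of the Jastrow trial state in excess of its main part: the mismatch of the
coupling, the cubic terms and the interaction of the modes outside `S`. -/
def jastrowExcess (S : Finset (Fin d → ℤ)) (c hw : (Fin d → ℤ) → ℝ) (lam : ℝ)
    (x : Config d N) : ℝ :=
  (N * lam - 1) / 2 * fluctuation S hw x + cubicRemainder S c x + lam / 2 * tailPotential hw S x

theorem continuous_jastrowExcess (hs : Summable hw) (hS : 0 ∉ S) :
    Continuous (jastrowExcess S c hw lam : Config d N → ℝ) := by
  have hfl : Continuous (fluctuation S hw : Config d N → ℝ) := continuous_fluctuation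
  have htail : Continuous (tailPotential hw S : Config d N → ℝ) := continuous_tailPotential hs hS
  have hρ (k : Fin d → ℤ) : Continuous (densityMode k : Config d N → ℂ) := continuous_densityMode k
  unfold jastrowExcess cubicRemainder
  fun_prop

variable [NeZero N]

theorem sum_jastrowHess_sub_sum_jastrowGrad_sq_add_le (hs : Summable hw) (hS : 0 ∉ S)
    (hneg : ∀ p ∈ S, -p ∈ S) (heven : ∀ p, c (-p) = c p)
    (hcw : ∀ p ∈ S, (c p + c p ^ 2) * pSq d p = hw p / 2) (x : Config d N) :
    ∑ j, ∑ i, jastrowHess S c j i x - ∑ j, ∑ i, jastrowGrad S c j i x ^ 2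
        + lam * pairPotential (wOf d hw) x
      ≤ ∑ p ∈ S, c p * pSq d p - N * lam / 2 * (∑' k, hw k - hw 0) + lam / 2 * N * (N - 1) * hw 0
        + jastrowExcess S c hw lam x := by
  have hgrad := abs_le.1 (abs_sum_jastrowGrad_sq_sub_le hneg heven x)
  have hpot : fluctuation S (fun p ↦ c p * pSq d p) x + fluctuation S (fun p ↦ c p ^ 2 * pSq d p) x
      = fluctuation S hw x / 2 := by
    simp only [fluctuation]
    rw [← sum_add_distrib, sum_div]
    exact sum_congr rfl fun p hp ↦ by rw [← add_mul, ← add_mul, hcw p hp]; ring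
  have hV := congrArg (lam / 2 * ·) (two_mul_pairPotential hs hS x)
  rw [sum_jastrowHess, jastrowExcess]
  linarith

theorem jastrowExcess_mul_exp_neg_fluctuation_le (h0 : ∀ k, 0 ≤ hw k) (hc : ∀ p ∈ S, 0 ≤ c p)
    (hlam : 0 ≤ lam) (x : Config d N) :
    jastrowExcess S c hw lam x * exp (-fluctuation S c x)
      ≤ |N * lam - 1| / 2 * fluctuation S hw x
        + (∑ p ∈ S, c p) / N *
          ∑ p ∈ S, ∑ q ∈ S.erase p, |mom p ⬝ᵥ mom q| * ‖densityMode (q - p) x‖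
        + lam / 2 * tailPotential hw S x := by
  have hfl : 0 ≤ fluctuation S hw x := fluctuation_nonneg (fun p _ ↦ h0 p) x
  have htail : 0 ≤ tailPotential hw S x := tailPotential_nonneg h0 S x
  have hexp : exp (-fluctuation S c x) ≤ 1 :=
    exp_le_one_iff.2 (neg_nonpos.2 (fluctuation_nonneg hc x))
  rw [jastrowExcess, add_mul, add_mul]
  gcongr ?_ + ?_ + ?_
  · calc _ ≤ |N * lam - 1| / 2 * fluctuation S hw x * exp (-fluctuation S c x) := by
          gcongr
          exact le_abs_self _
      _ ≤ _ := mul_le_of_le_one_right (by positivity) hexp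
  · exact cubicRemainder_mul_exp_neg_fluctuation_le hc x
  · exact mul_le_of_le_one_right (by positivity) hexp

theorem integral_jastrowExcess_le (h0 : ∀ k, 0 ≤ hw k) (hs : Summable hw) (hS : 0 ∉ S)
    (hc : ∀ p ∈ S, 0 ≤ c p) (hlam : 0 ≤ lam) :
    ∫ x in cube d N, jastrowExcess S c hw lam x * ‖jastrowState d N S c x‖ ^ 2
      ≤ exp (∑ p ∈ S, c p) * (|N * lam - 1| / 2 * ∑ p ∈ S, hw p
          + (∑ p ∈ S, c p) / N * (cubicWeight S 1 * √N)
          + N * lam / 2 * (∑' k, hw k - hw 0 - ∑ p ∈ S, hw p)) := by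
  set B := ∑ p ∈ S, c p
  have hfl : Continuous (fluctuation S hw : Config d N → ℝ) := continuous_fluctuation
  have htail : Continuous (tailPotential hw S : Config d N → ℝ) := continuous_tailPotential hs hS
  have hρ (k : Fin d → ℤ) : Continuous (densityMode k : Config d N → ℂ) := continuous_densityMode k
  have hB : 0 ≤ B := sum_nonneg hc
  have hbound_nonneg (x : Config d N) : 0 ≤ |N * lam - 1| / 2 * fluctuation S hw x
      + B / N * ∑ p ∈ S, ∑ q ∈ S.erase p, |mom p ⬝ᵥ mom q| * ‖densityMode (q - p) x‖
      + lam / 2 * tailPotential hw S x := by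
    have := fluctuation_nonneg (S := S) (fun p _ ↦ h0 p) x
    have := tailPotential_nonneg h0 S x
    positivity
  refine (integral_mul_norm_jastrowState_sq_le hS (continuous_jastrowExcess hs hS) (by fun_prop)
    hbound_nonneg (jastrowExcess_mul_exp_neg_fluctuation_le h0 hc hlam)).trans ?_
  rw [integral_add (integrableOn_cube (by fun_prop)) (integrableOn_cube (by fun_prop)),
    integral_add (integrableOn_cube (by fun_prop)) (integrableOn_cube (by fun_prop)),
    integral_const_mul, integral_const_mul, integral_const_mul, integral_fluctuation hS,
    integral_tailPotential hs hS, mul_comm (N : ℝ) lam, mul_div_right_comm, mul_assoc (lam / 2)]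
  gcongr
  exact integral_sum_abs_mul_norm_densityMode_le

theorem energy_jastrowState_le (h0 : ∀ k, 0 ≤ hw k) (hs : Summable hw) (hS : 0 ∉ S)
    (hneg : ∀ p ∈ S, -p ∈ S) (hc : ∀ p ∈ S, 0 ≤ c p) (heven : ∀ p, c (-p) = c p)
    (hcw : ∀ p ∈ S, (c p + c p ^ 2) * pSq d p = hw p / 2) (hlam : 0 ≤ lam) :
    energy d N lam (wOf d hw) (jastrowState d N S c)
      ≤ ∑ p ∈ S, c p * pSq d p - N * lam / 2 * (∑' k, hw k - hw 0) + lam / 2 * N * (N - 1) * hw 0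
        + exp (∑ p ∈ S, c p) * (|N * lam - 1| / 2 * ∑ p ∈ S, hw p
          + (∑ p ∈ S, c p) / N * (cubicWeight S 1 * √N)
          + N * lam / 2 * (∑' k, hw k - hw 0 - ∑ p ∈ S, hw p)) := by
  set P := ∑ p ∈ S, c p * pSq d p - N * lam / 2 * (∑' k, hw k - hw 0)
    + lam / 2 * N * (N - 1) * hw 0
  have hΨ := isAdmissible_jastrowState (N := N) (c := c) hS
  have hΨ2 : Continuous fun x ↦ ‖jastrowState d N S c x‖ ^ 2 := hΨ.1.continuous.norm.pow 2
  have hexcess := continuous_jastrowExcess (N := N) (c := c) (lam := lam) hs hS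
  have hV := continuous_pairPotential (N := N) (continuous_wOf hs)
  have hhess : Continuous fun x : Config d N ↦
      ∑ j, ∑ i, jastrowHess S c j i x - ∑ j, ∑ i, jastrowGrad S c j i x ^ 2 :=
    (continuous_finsetSum _ fun j _ ↦ continuous_finsetSum _ fun i _ ↦
      (hasPeriodicDeriv_jastrowGrad S c j i).continuous_deriv).sub
    (continuous_finsetSum _ fun j _ ↦ continuous_finsetSum _ fun i _ ↦
      (hasPeriodicDeriv_jastrowGrad S c j i).continuous.pow 2)
  rw [hΨ.energy_eq lam (continuous_wOf hs), kineticEnergy_jastrowState hS,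
    ← integral_add (integrableOn_cube (by fun_prop)) (integrableOn_cube (by fun_prop))]
  calc _ ≤ ∫ x in cube d N, (P * ‖jastrowState d N S c x‖ ^ 2
          + jastrowExcess S c hw lam x * ‖jastrowState d N S c x‖ ^ 2) := by
        refine integral_mono (integrableOn_cube (by fun_prop)) (integrableOn_cube (by fun_prop))
          fun x ↦ ?_
        simp only [← add_mul]
        exact mul_le_mul_of_nonneg_right
          (sum_jastrowHess_sub_sum_jastrowGrad_sq_add_le hs hS hneg heven hcw x) (sq_nonneg _)
    _ = P + ∫ x in cube d N, jastrowExcess S c hw lam x * ‖jastrowState d N S c x‖ ^ 2 := by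
        rw [integral_add (integrableOn_cube (by fun_prop)) (integrableOn_cube (by fun_prop)),
          integral_const_mul, hΨ.2.2.2, mul_one]
    _ ≤ _ := by
        gcongr
        exact integral_jastrowExcess_le h0 hs hS hc hlam

end UpperBound

/-! ### The mean-field limit -/

section Limit

variable {d : ℕ} {hw c : (Fin d → ℤ) → ℝ} {S : Finset (Fin d → ℤ)} {lam : ℕ → ℝ} {a : ℝ}

theorem eventually_pos_of_tendsto_natCast_mul
    (hlim : Tendsto (fun N : ℕ ↦ (N : ℝ) * lam N) atTop (𝓝 1)) : ∀ᶠ N in atTop, 0 < lam N := by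
  filter_upwards [hlim.eventually_const_lt one_pos] with N hN
  exact pos_of_mul_pos_right hN N.cast_nonneg

theorem eventually_lt_energy (h0 : ∀ k, 0 ≤ hw k) (hs : Summable hw) (hS : 0 ∉ S)
    (hneg : ∀ p ∈ S, -p ∈ S) (hc : ∀ p ∈ S, 0 ≤ c p) (heven : ∀ p, c (-p) = c p)
    (hcw : ∀ p ∈ S, (c p + c p ^ 2) * pSq d p = hw p / 2)
    (hlim : Tendsto (fun N : ℕ ↦ (N : ℝ) * lam N) atTop (𝓝 1))
    (ha : a < ∑ p ∈ S, c p * pSq d p - (∑' k, hw k - hw 0) / 2) :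
    ∀ᶠ N in atTop, ∀ Ψ, IsAdmissible d N Ψ →
      a + lam N / 2 * N * (N - 1) * hw 0 < energy d N (lam N) (wOf d hw) Ψ := by
  set P := ∑ p ∈ S, c p * pSq d p
  set Q := ∑ p ∈ modeClosure S, pSq d p
  set V := ∑' k, hw k - hw 0
  set δ : ℝ := 1 / (2 * #(modeClosure S) + 2)
  have hδ : 0 < δ := by positivity
  have hδS : δ * #(modeClosure S) ≤ 1 / 2 := by
    rw [div_mul_eq_mul_div, div_le_div_iff₀ (by positivity) two_pos]
    linarith
  obtain ⟨ε, ⟨hε₀, hε₁⟩, haε⟩ : ∃ ε, (0 < ε ∧ ε < 1) ∧ a < (1 - ε) * P - V / 2 - ε * δ * Q := by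
    have hcont : Continuous fun ε : ℝ ↦ (1 - ε) * P - V / 2 - ε * δ * Q := by fun_prop
    have hnear := (hcont.tendsto 0).eventually_const_lt (u := a) (by simpa using ha)
    exact ((eventually_mem_set.2 (Ioo_mem_nhdsGT one_pos)).and
      (eventually_nhdsWithin_of_eventually_nhds hnear)).exists
  obtain ⟨η, L, hη, hL, hcη, herr⟩ := exists_cutoffError_le hc (mul_pos hε₀ hδ)
  have hmain : Tendsto (fun N : ℕ ↦ (1 - ε) * P - N * lam N / 2 * V - ε * δ * Q) atTop
      (𝓝 ((1 - ε) * P - 1 / 2 * V - ε * δ * Q)) :=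
    (((hlim.div_const 2).mul_const V).const_sub _).sub_const _
  filter_upwards [herr, hmain.eventually_const_lt (show a < _ by linarith),
    hlim.eventually_const_lt (sub_lt_self 1 hε₀), eventually_pos_of_tendsto_natCast_mul hlim,
    eventually_ge_atTop 1] with N herrN haN hlamN hlam hN Ψ hΨ
  have : NeZero N := ⟨Nat.one_le_iff_ne_zero.1 hN⟩
  have henergy := hΨ.le_energy h0 hs hS hneg hc heven hcw hη (by positivity)
    (by simpa [div_mul_cancel₀] using hcη) hδ.le hδS hε₀.le hε₁.le hlam.le hlamN.le herrN
  linarith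

theorem eventually_energy_jastrowState_lt (h0 : ∀ k, 0 ≤ hw k) (hs : Summable hw) (hS : 0 ∉ S)
    (hneg : ∀ p ∈ S, -p ∈ S) (hc : ∀ p ∈ S, 0 ≤ c p) (heven : ∀ p, c (-p) = c p)
    (hcw : ∀ p ∈ S, (c p + c p ^ 2) * pSq d p = hw p / 2)
    (hlim : Tendsto (fun N : ℕ ↦ (N : ℝ) * lam N) atTop (𝓝 1))
    (ha : ∑ p ∈ S, c p * pSq d p - (∑' k, hw k - hw 0) / 2
      + exp (∑ p ∈ S, c p) * ((∑' k, hw k - hw 0 - ∑ p ∈ S, hw p) / 2) < a) :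
    ∀ᶠ N in atTop, energy d N (lam N) (wOf d hw) (jastrowState d N S c)
      < a + lam N / 2 * N * (N - 1) * hw 0 := by
  set P := ∑ p ∈ S, c p * pSq d p
  set V := ∑' k, hw k - hw 0
  set B := ∑ p ∈ S, c p
  set R := ∑ p ∈ S, hw p
  have hcoupling : Tendsto (fun N : ℕ ↦ |N * lam N - 1| / 2 * R) atTop (𝓝 0) := by
    simpa using ((hlim.sub_const 1).abs.div_const 2).mul_const R
  have hcubic : Tendsto (fun N : ℕ ↦ B / N * (cubicWeight S 1 * √N)) atTop (𝓝 0) := by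
    have hsqrt : Tendsto (fun N : ℕ ↦ (√(N : ℝ))⁻¹) atTop (𝓝 0) :=
      (tendsto_sqrt_atTop.comp tendsto_natCast_atTop_atTop).inv_tendsto_atTop
    rw [← mul_zero (B * cubicWeight S 1)]
    refine (hsqrt.const_mul _).congr fun N ↦ ?_
    rw [← sqrt_div_self]
    ring
  have hmain : Tendsto (fun N : ℕ ↦ P - N * lam N / 2 * V + exp B * (|N * lam N - 1| / 2 * R
      + B / N * (cubicWeight S 1 * √N) + N * lam N / 2 * (V - R))) atTop
      (𝓝 (P - 1 / 2 * V + exp B * (0 + 0 + 1 / 2 * (V - R)))) :=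
    (((hlim.div_const 2).mul_const V).const_sub P).add
      (((hcoupling.add hcubic).add ((hlim.div_const 2).mul_const _)).const_mul _)
  filter_upwards [hmain.eventually_lt_const (show _ < a by linarith),
    eventually_pos_of_tendsto_natCast_mul hlim, eventually_ge_atTop 1] with N haN hlam hN
  have : NeZero N := ⟨Nat.one_le_iff_ne_zero.1 hN⟩
  linarith [energy_jastrowState_le (N := N) h0 hs hS hneg hc heven hcw hlam.le]

theorem exists_lt_sum_bogoliubovCoeff_mul_pSq (h0 : ∀ k, 0 ≤ hw k) (hs : Summable hw)
    (ha : a < eB d hw) :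
    ∃ S : Finset (Fin d → ℤ), (∀ p ∈ S, -p ∈ S) ∧ 0 ∉ S ∧
      a < ∑ p ∈ S, bogoliubovCoeff d hw p * pSq d p - (∑' k, hw k - hw 0) / 2 := by
  rw [eB_eq_tsum_bogoliubovCoeff_mul_pSq h0 hs] at ha
  obtain ⟨S, hneg, hS, haS⟩ := exists_neg_mem_of_eventually_atTop <|
    ((summable_bogoliubovCoeff_mul_pSq h0 hs).hasSum.sub_const _).eventually_const_lt ha
  refine ⟨S, hneg, hS, ?_⟩
  simpa [sum_insert hS, bogoliubovCoeff_zero] using haS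

theorem exists_sum_bogoliubovCoeff_mul_pSq_add_lt (h0 : ∀ k, 0 ≤ hw k) (hs : Summable hw)
    (ha : eB d hw < a) :
    ∃ S : Finset (Fin d → ℤ), (∀ p ∈ S, -p ∈ S) ∧ 0 ∉ S ∧
      ∑ p ∈ S, bogoliubovCoeff d hw p * pSq d p - (∑' k, hw k - hw 0) / 2
        + exp (∑ p ∈ S, bogoliubovCoeff d hw p) * ((∑' k, hw k - hw 0 - ∑ p ∈ S, hw p) / 2)
        < a := by
  rw [eB_eq_tsum_bogoliubovCoeff_mul_pSq h0 hs] at ha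
  have htail : Tendsto (fun s : Finset (Fin d → ℤ) ↦ exp (∑ p ∈ s, bogoliubovCoeff d hw p)
      * ((∑' k, hw k - ∑ p ∈ s, hw p) / 2)) atTop (𝓝 0) := by
    simpa using ((continuous_exp.tendsto _).comp (summable_bogoliubovCoeff h0 hs).hasSum).mul
      ((hs.hasSum.const_sub (∑' k, hw k)).div_const 2)
  obtain ⟨S, hneg, hS, haS⟩ := exists_neg_mem_of_eventually_atTop <|
    (((summable_bogoliubovCoeff_mul_pSq h0 hs).hasSum.sub_const _).add htail).eventually_lt_const
      (by rwa [add_zero])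
  refine ⟨S, hneg, hS, ?_⟩
  simpa [sum_insert hS, bogoliubovCoeff_zero, sub_sub] using haS

theorem eventually_lt_energy_of_lt_eB (h0 : ∀ k, 0 ≤ hw k) (heven : ∀ k, hw (-k) = hw k)
    (hs : Summable hw) (hlim : Tendsto (fun N : ℕ ↦ (N : ℝ) * lam N) atTop (𝓝 1))
    (ha : a < eB d hw) :
    ∀ᶠ N in atTop, ∀ Ψ, IsAdmissible d N Ψ →
      a + lam N / 2 * N * (N - 1) * hw 0 < energy d N (lam N) (wOf d hw) Ψ := by
  obtain ⟨S, hneg, hS, haS⟩ := exists_lt_sum_bogoliubovCoeff_mul_pSq h0 hs ha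
  exact eventually_lt_energy h0 hs hS hneg (fun p _ ↦ bogoliubovCoeff_nonneg h0 p)
    (bogoliubovCoeff_neg heven)
    (fun p hp ↦ bogoliubovCoeff_add_sq_mul_pSq h0 (ne_of_mem_of_not_mem hp hS)) hlim haS

theorem eventually_exists_energy_lt_of_eB_lt (h0 : ∀ k, 0 ≤ hw k) (heven : ∀ k, hw (-k) = hw k)
    (hs : Summable hw) (hlim : Tendsto (fun N : ℕ ↦ (N : ℝ) * lam N) atTop (𝓝 1))
    (ha : eB d hw < a) :
    ∀ᶠ N in atTop, ∃ Ψ, IsAdmissible d N Ψ ∧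
      energy d N (lam N) (wOf d hw) Ψ < a + lam N / 2 * N * (N - 1) * hw 0 := by
  obtain ⟨S, hneg, hS, haS⟩ := exists_sum_bogoliubovCoeff_mul_pSq_add_lt h0 hs ha
  filter_upwards [eventually_ge_atTop 1, eventually_energy_jastrowState_lt h0 hs hS hneg
    (fun p _ ↦ bogoliubovCoeff_nonneg h0 p) (bogoliubovCoeff_neg heven)
    (fun p hp ↦ bogoliubovCoeff_add_sq_mul_pSq h0 (ne_of_mem_of_not_mem hp hS)) hlim haS]
    with N hN hlt
  have : NeZero N := ⟨Nat.one_le_iff_ne_zero.1 hN⟩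
  exact ⟨_, isAdmissible_jastrowState hS, hlt⟩

end Limit

section Gse

variable {d N : ℕ} {lam e : ℝ} {w : (Fin d → ℝ) → ℝ}

theorem le_GSE [NeZero N] (h : ∀ Ψ, IsAdmissible d N Ψ → e ≤ energy d N lam w Ψ) :
    e ≤ GSE d N lam w := by
  refine le_csInf ⟨_, _, isAdmissible_jastrowState (notMem_empty 0) (c := 0), rfl⟩ ?_
  rintro _ ⟨Ψ, hΨ, rfl⟩
  exact h Ψ hΨ

theorem GSE_le_energy (h : ∀ Ψ, IsAdmissible d N Ψ → e ≤ energy d N lam w Ψ) {Ψ : Config d N → ℂ}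
    (hΨ : IsAdmissible d N Ψ) : GSE d N lam w ≤ energy d N lam w Ψ := by
  refine csInf_le ⟨e, ?_⟩ ⟨Ψ, hΨ, rfl⟩
  rintro _ ⟨Φ, hΦ, rfl⟩
  exact h Φ hΦ

end Gse

/-- **Ground state energy expansion.** If `N·λ_N → 1`, then
`E(λ_N,N) - (λ_N/2) N (N-1) ŵ(0)` converges to the Bogoliubov energy `e_B`. -/
theorem ground_state_energy_expansion (d : ℕ) (hd : 1 ≤ d)
    (hw : (Fin d → ℤ) → ℝ) (hw_nonneg : ∀ k, 0 ≤ hw k)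
    (hw_even : ∀ k, hw (-k) = hw k) (hw_summable : Summable hw)
    (lam : ℕ → ℝ) (hlam_pos : ∀ N, 1 ≤ N → 0 < lam N)
    (hlam_lim : Filter.Tendsto (fun N : ℕ => (N : ℝ) * lam N) Filter.atTop (nhds 1)) :
    Filter.Tendsto
      (fun N : ℕ =>
        GSE d N (lam N) (wOf d hw) - lam N / 2 * (N : ℝ) * ((N : ℝ) - 1) * hw 0)
      Filter.atTop (nhds (eB d hw)) := by
  refine tendsto_order.2 ⟨fun a ha ↦ ?_, fun a ha ↦ ?_⟩
  · obtain ⟨b, hab, hb⟩ := exists_between ha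
    filter_upwards [eventually_lt_energy_of_lt_eB hw_nonneg hw_even hw_summable hlam_lim hb,
      eventually_ge_atTop 1] with N hlower hN
    have : NeZero N := ⟨Nat.one_le_iff_ne_zero.1 hN⟩
    linarith [le_GSE fun Ψ hΨ ↦ (hlower Ψ hΨ).le]
  · filter_upwards [eventually_lt_energy_of_lt_eB hw_nonneg hw_even hw_summable hlam_lim
      (sub_one_lt _), eventually_exists_energy_lt_of_eB_lt hw_nonneg hw_even hw_summable hlam_lim
      ha] with N hlower ⟨Ψ, hΨ, hupper⟩
    linarith [GSE_le_energy (fun Φ hΦ ↦ (hlower Φ hΦ).le) hΨ]
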